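/- There are infinitely many integers m ≥ 2 such that Ω(m(m^2 − 1)) ≤ 11, i.e. the set of integers m ≥ 2 with Ω(m^3 − m) ≤ 11 is infinite. -/

import Mathlib

/-!
For `m = 36 n + 6` one has `m ^ 3 - m = 6 F(n)` with `F(n) = (6 n + 1) (36 n + 5) (36 n + 7)`, so it
is enough to find infinitely many `n` with `Ω(F(n)) ≤ 9`.

Weigh `n ∈ [N, 2 N)` by the square `(∑ d ∣ F(n), w d) ^ 2` of Selberg's sieve of level `R`, where
the weights `w` correspond to `y r = log⁺ (R / r)` in the diagonalised quadratic form, and `N`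
exceeds `R ^ 4` by a power of `log R`. With `Y = 2 log R`, the number of prime factors satisfies
`Ω(F(n)) ≤ log F(n) / Y + ∑ p ∣ F(n), (1 - log p / Y)`, where the sum is over the primes
`p ≤ R ^ 2`, up to the contribution of proper prime powers. The first term tends to `6`. In
the weighted mean, a prime `p` divides `F(n)` with a frequency governed by `3 / p` times the square
of `y r - y (p r) ≤ min (log p) (log⁺ (R / r))`, so that small primes hardly occur; Mertens' theorem
bounds the mean of the sum by `3 (log 5 - 1 / 2 + 2 / 15) + o(1)`, and the total is below `10`.
-/

open Finset Real

namespace WeightedSieve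

/-! ### Mertens' theorems -/

lemma summable_log_div_sq : Summable fun n : ℕ ↦ log n / (n : ℝ) ^ 2 := by
  have hlog : (fun n : ℕ ↦ log n) =O[Filter.atTop] fun n : ℕ ↦ (n : ℝ) ^ (1 / 2 : ℝ) :=
    (isLittleO_log_rpow_atTop (by norm_num)).isBigO.comp_tendsto tendsto_natCast_atTop_atTop
  refine summable_of_isBigO_nat (Real.summable_nat_rpow_inv.2 (by norm_num : (1 : ℝ) < 3 / 2)) ?_
  refine (hlog.mul (Asymptotics.isBigO_refl (fun n : ℕ ↦ ((n : ℝ) ^ 2)⁻¹) _)).congr_right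
    fun n ↦ ?_
  obtain rfl | hn := n.eq_zero_or_pos
  · simp
  rw [← rpow_natCast, ← rpow_neg (by positivity), ← rpow_neg (by positivity),
    ← rpow_add (by positivity)]
  norm_num

lemma log_factorial_eq_sum_primesLE (n : ℕ) :
    log n.factorial = ∑ p ∈ n.primesLE, (n.factorial.factorization p : ℝ) * log p := by
  rw [log_nat_eq_sum_factorization, Finsupp.sum]
  refine sum_subset (fun p hp ↦ ?_) fun p _ hp ↦ by simp [Finsupp.notMem_support_iff.1 hp]
  obtain ⟨hprime, hdvd, -⟩ := Nat.mem_primeFactors.1 (Nat.support_factorization _ ▸ hp)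
  exact Nat.mem_primesLE.2 ⟨hprime.dvd_factorial.1 hdvd, hprime⟩

lemma div_sub_one_le_factorization_factorial {p : ℕ} (hp : p.Prime) (n : ℕ) :
    (n : ℝ) / p - 1 ≤ n.factorial.factorization p := by
  have hfloor : (n : ℝ) / p - 1 < (n / p : ℕ) := by
    simpa [Nat.floor_div_natCast] using Nat.sub_one_lt_floor ((n : ℝ) / p)
  have hlegendre : n / p ≤ n.factorial.factorization p := by
    rw [Nat.factorization_factorial hp (b := Nat.log p n + 2) (by lia)]
    simpa using single_le_sum_of_canonicallyOrdered (f := fun i ↦ n / p ^ i)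
      (mem_Ico.2 ⟨le_rfl, by lia⟩ : 1 ∈ Ico 1 (Nat.log p n + 2))
  exact hfloor.le.trans (by exact_mod_cast hlegendre)

lemma factorization_factorial_le {p : ℕ} (hp : p.Prime) (n : ℕ) :
    (n.factorial.factorization p : ℝ) ≤ n * (1 / p + 2 / p ^ 2) := by
  have hp2 : (2 : ℝ) ≤ p := by exact_mod_cast hp.two_le
  calc (n.factorial.factorization p : ℝ)
      ≤ (n / (p - 1) : ℕ) := by exact_mod_cast Nat.factorization_factorial_le_div_pred hp n
    _ ≤ n / (p - 1) := by
      simpa [Nat.cast_pred hp.pos] using Nat.cast_div_le (α := ℝ) (m := n) (n := p - 1)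
    _ = n * (1 / (p - 1)) := by ring
    _ ≤ n * (1 / p + 2 / p ^ 2) := by
      gcongr
      rw [div_add_div _ _ (by positivity) (by positivity),
        div_le_div_iff₀ (by linarith) (by positivity)]
      nlinarith

lemma sum_log_div_primesLE_le {n : ℕ} (hn : 0 < n) :
    ∑ p ∈ n.primesLE, log p / p ≤ log n + log 4 := by
  have hfactorial : log n.factorial ≤ n * log n := by
    rw [← log_pow]
    exact log_le_log (by positivity) (by exact_mod_cast Nat.factorial_le_pow n)
  have htheta : ∑ p ∈ n.primesLE, log p ≤ log 4 * n :=
    Chebyshev.theta_eq_sum_primesLE_log n ▸ Chebyshev.theta_le_log4_mul_x n.cast_nonneg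
  have hsum : n * ∑ p ∈ n.primesLE, log p / p - ∑ p ∈ n.primesLE, log p ≤ log n.factorial := by
    rw [log_factorial_eq_sum_primesLE, mul_sum, ← sum_sub_distrib]
    refine sum_le_sum fun p hp ↦ ?_
    calc n * (log p / p) - log p = (n / p - 1) * log p := by ring
      _ ≤ _ := by
        gcongr
        exact div_sub_one_le_factorization_factorial (Nat.prime_of_mem_primesLE hp) n
  refine le_of_mul_le_mul_left ?_ (Nat.cast_pos.2 hn : (0 : ℝ) < n)
  linarith

lemma log_sub_le_sum_log_div_primesLE {n : ℕ} (hn : 0 < n) :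
    log n - (1 + 2 * ∑' k : ℕ, log k / (k : ℝ) ^ 2) ≤ ∑ p ∈ n.primesLE, log p / p := by
  have hfactorial : (n : ℝ) * log n - n ≤ log n.factorial := by
    have hstirling := Stirling.le_log_factorial_stirling hn.ne'
    have : 0 ≤ log (2 * π) := log_nonneg (by linarith [pi_gt_three])
    linarith [log_natCast_nonneg n]
  have hsquares : ∑ p ∈ n.primesLE, log p / (p : ℝ) ^ 2 ≤ ∑' k : ℕ, log k / (k : ℝ) ^ 2 :=
    summable_log_div_sq.sum_le_tsum _ fun k _ ↦ by positivity
  have hsum : log n.factorial ≤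
      n * (∑ p ∈ n.primesLE, log p / p + 2 * ∑ p ∈ n.primesLE, log p / (p : ℝ) ^ 2) := by
    rw [log_factorial_eq_sum_primesLE, mul_sum _ _ (2 : ℝ), ← sum_add_distrib, mul_sum]
    refine sum_le_sum fun p hp ↦ ?_
    calc (n.factorial.factorization p : ℝ) * log p ≤ n * (1 / p + 2 / p ^ 2) * log p := by
          gcongr
          exact factorization_factorial_le (Nat.prime_of_mem_primesLE hp) n
      _ = _ := by ring
  refine le_of_mul_le_mul_left ?_ (Nat.cast_pos.2 hn : (0 : ℝ) < n)
  nlinarith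

/-- The weight `log p / p` on the primes, extended by zero to all natural numbers. -/
noncomputable def primeWeight (k : ℕ) : ℝ := if k.Prime then log k / k else 0

lemma sum_primeWeight_mul (n : ℕ) (g : ℕ → ℝ) :
    ∑ k ∈ Icc 1 n, primeWeight k * g k = ∑ p ∈ n.primesLE, log p / p * g p := by
  simp [Nat.primesLE_eq_filter_Icc_one, sum_filter, primeWeight, ite_mul]

theorem exists_abs_sum_primeWeight_sub_log_le :
    ∃ B : ℝ, 0 ≤ B ∧ ∀ n : ℕ, 0 < n → |∑ k ∈ Icc 1 n, primeWeight k - log n| ≤ B := by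
  set S := ∑' k : ℕ, log k / (k : ℝ) ^ 2
  have hS : 0 ≤ S := tsum_nonneg fun k ↦ by positivity
  have hlog4 : 0 ≤ log 4 := by positivity
  refine ⟨log 4 + (1 + 2 * S), by positivity, fun n hn ↦ abs_le.2 ?_⟩
  have hsum := sum_primeWeight_mul n 1
  simp only [Pi.one_apply, mul_one] at hsum
  have hupper := sum_log_div_primesLE_le hn
  have hlower := log_sub_le_sum_log_div_primesLE hn
  constructor <;> linarith

/-! ### Abel summation against the logarithm -/

section Abel

variable {f : ℝ → ℝ}

lemma integral_mem_Icc_of_monotoneOn {a b : ℝ} (hab : a ≤ b) (hf : MonotoneOn f (Set.Icc a b)) :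
    ∫ u in a..b, f u ∈ Set.Icc ((b - a) * f a) ((b - a) * f b) := by
  have hint : IntervalIntegrable f MeasureTheory.volume a b :=
    MonotoneOn.intervalIntegrable (by rwa [Set.uIcc_of_le hab])
  constructor
  · simpa using intervalIntegral.integral_mono_on hab intervalIntegrable_const hint
      fun x hx ↦ hf ⟨le_rfl, hab⟩ hx hx.1
  · simpa using intervalIntegral.integral_mono_on hab hint intervalIntegrable_const
      fun x hx ↦ hf hx ⟨hab, le_rfl⟩ hx.2

lemma log_succ_sub_log_mem_Icc {n : ℕ} (hn : 0 < n) :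
    log (n + 1 : ℕ) - log n ∈ Set.Icc (0 : ℝ) 1 := by
  have hn1 : (1 : ℝ) ≤ n := by exact_mod_cast hn
  refine ⟨sub_nonneg.2 (log_le_log (by positivity) (by simp)), ?_⟩
  rw [← log_div (by positivity) (by positivity)]
  refine (log_le_sub_one_of_pos (by positivity)).trans ?_
  rw [sub_le_iff_le_add, div_le_iff₀ (by positivity)]
  push_cast
  linarith

variable {c : ℕ → ℝ} {B : ℝ}

lemma abs_sum_mul_log_sub_integral_sub_le
    (hc : ∀ n : ℕ, 0 < n → |∑ k ∈ Icc 1 n, c k - log n| ≤ B)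
    (hf : MonotoneOn f (Set.Ici 0)) {n : ℕ} (hn : 0 < n) :
    |∑ k ∈ Icc 1 n, c k * f (log k) - (∫ u in 0..log n, f u)
      - (∑ k ∈ Icc 1 n, c k - log n) * f (log n)| ≤ (B + 1) * (f (log n) - f 0) := by
  have hlog (k : ℕ) : 0 ≤ log k := log_natCast_nonneg k
  have hint {a b : ℝ} (ha : 0 ≤ a) (hb : 0 ≤ b) :
      IntervalIntegrable f MeasureTheory.volume a b :=
    (hf.mono fun x hx ↦ (le_min ha hb).trans hx.1).intervalIntegrable
  induction n, hn using Nat.le_induction with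
  | base => simp
  | succ n hn ih =>
    rw [sum_Icc_succ_top (by lia), sum_Icc_succ_top (by lia),
      ← intervalIntegral.integral_add_adjacent_intervals (hint le_rfl (hlog n))
        (hint (hlog n) (hlog _))]
    obtain ⟨hδ₀, hδ₁⟩ := log_succ_sub_log_mem_Icc hn
    have hmono : f (log n) ≤ f (log (n + 1 : ℕ)) := hf (hlog _) (hlog _) (sub_nonneg.1 hδ₀)
    obtain ⟨hI₀, hI₁⟩ := integral_mem_Icc_of_monotoneOn (sub_nonneg.1 hδ₀)
      (hf.mono fun x hx ↦ (hlog n).trans hx.1)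
    have hcn := abs_le.1 (hc n hn)
    set δ := log (n + 1 : ℕ) - log n with hδ
    set φ := f (log (n + 1 : ℕ)) - f (log n) with hφ
    have hφ₀ : 0 ≤ φ := sub_nonneg.2 hmono
    have h₁ := mul_le_mul_of_nonneg_right hcn.1 hφ₀
    have h₂ := mul_le_mul_of_nonneg_right hcn.2 hφ₀
    have h₃ := mul_le_mul_of_nonneg_right hδ₁ hφ₀
    rw [abs_le] at ih ⊢
    constructor <;> nlinarith

/-- The sum on the left is a Stieltjes integral of `f` against `∑_{k ≤ e ^ u} c k = u + O(B)`. -/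
theorem abs_sum_mul_log_sub_integral_le
    (hc : ∀ n : ℕ, 0 < n → |∑ k ∈ Icc 1 n, c k - log n| ≤ B)
    (hf : MonotoneOn f (Set.Ici 0)) {M : ℝ} (hM : ∀ u, 0 ≤ u → |f u| ≤ M)
    {n : ℕ} (hn : 0 < n) :
    |∑ k ∈ Icc 1 n, c k * f (log k) - ∫ u in 0..log n, f u| ≤ (3 * B + 2) * M := by
  have hB : 0 ≤ B := (abs_nonneg _).trans (hc n hn)
  have habel := abs_le.1 (abs_sum_mul_log_sub_integral_sub_le hc hf hn)
  have hfn := hM _ (log_natCast_nonneg n)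
  have hboundary : |(∑ k ∈ Icc 1 n, c k - log n) * f (log n)| ≤ B * M := by
    rw [abs_mul]
    exact mul_le_mul (hc n hn) hfn (abs_nonneg _) hB
  have hvariation : (B + 1) * (f (log n) - f 0) ≤ (B + 1) * (2 * M) := by
    gcongr
    linarith [(abs_le.1 hfn).2, (abs_le.1 (hM 0 le_rfl)).1]
  rw [abs_le] at hboundary ⊢
  constructor <;> linarith [hboundary.1, hboundary.2]

end Abel

lemma exists_abs_sum_primesLE_sub_integral_le :
    ∃ C : ℝ, 0 ≤ C ∧ ∀ (f : ℝ → ℝ) (M : ℝ) (n : ℕ), MonotoneOn f (Set.Ici 0) →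
      (∀ u, 0 ≤ u → |f u| ≤ M) → 0 < n →
      |∑ p ∈ n.primesLE, log p / p * f (log p) - ∫ u in 0..log n, f u| ≤ C * M := by
  obtain ⟨B, hB, hmertens⟩ := exists_abs_sum_primeWeight_sub_log_le
  refine ⟨3 * B + 2, by positivity, fun f M n hf hM hn ↦ ?_⟩
  rw [← sum_primeWeight_mul n fun k ↦ f (log k)]
  exact abs_sum_mul_log_sub_integral_le hmertens hf hM hn

lemma integral_eq_add_of_eqOn {g g₁ g₂ : ℝ → ℝ} {a b c : ℝ} (hg : Continuous g) (hab : a ≤ b)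
    (hbc : b ≤ c) (h₁ : Set.EqOn g g₁ (Set.Icc a b)) (h₂ : Set.EqOn g g₂ (Set.Icc b c)) :
    ∫ u in a..c, g u = (∫ u in a..b, g₁ u) + ∫ u in b..c, g₂ u := by
  rw [← intervalIntegral.integral_add_adjacent_intervals (hg.intervalIntegrable a b)
    (hg.intervalIntegrable b c)]
  congr 1 <;> refine intervalIntegral.integral_congr ?_
  · rwa [Set.uIcc_of_le hab]
  · rwa [Set.uIcc_of_le hbc]

section Integrals

variable {L Y : ℝ}

lemma continuous_inv_max (hL : 0 < L) : Continuous fun u : ℝ ↦ (max u L)⁻¹ :=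
  (continuous_id.max continuous_const).inv₀ fun _ ↦ (hL.trans_le (le_max_right _ _)).ne'

lemma integral_min (hL : 0 ≤ L) (hLY : L ≤ Y) :
    ∫ u in 0..Y, min u L = L * Y - L ^ 2 / 2 := by
  rw [integral_eq_add_of_eqOn (by fun_prop) hL hLY
    (fun u hu ↦ min_eq_left hu.2) (fun u hu ↦ min_eq_right hu.1)]
  simp only [integral_id, intervalIntegral.integral_const, smul_eq_mul]
  ring

lemma integral_min_sq (hL : 0 ≤ L) (hLY : L ≤ Y) :
    ∫ u in 0..Y, min u L ^ 2 = L ^ 2 * Y - 2 / 3 * L ^ 3 := by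
  rw [integral_eq_add_of_eqOn (by fun_prop) hL hLY
    (g₁ := fun u ↦ u ^ 2) (g₂ := fun _ ↦ L ^ 2) (fun u hu ↦ by simp [min_eq_left hu.2])
    (fun u hu ↦ by simp [min_eq_right hu.1])]
  simp only [integral_pow, Nat.reduceAdd, Nat.cast_ofNat, intervalIntegral.integral_const,
    smul_eq_mul]
  ring

lemma integral_inv_max (hL : 0 < L) (hLY : L ≤ Y) :
    ∫ u in 0..Y, (max u L)⁻¹ = 1 + log (Y / L) := by
  rw [integral_eq_add_of_eqOn (continuous_inv_max hL) hL.le hLY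
    (g₁ := fun _ ↦ L⁻¹) (g₂ := fun u ↦ u⁻¹) (fun u hu ↦ by simp [max_eq_right hu.2])
    (fun u hu ↦ by simp [max_eq_left hu.1]), integral_inv_of_pos hL (hL.trans_le hLY)]
  simp [hL.ne']

lemma monotone_neg_inv_max (hL : 0 < L) : Monotone fun u : ℝ ↦ -(max u L)⁻¹ := fun u v huv ↦ by
  have : 0 < max u L := hL.trans_le (le_max_right _ _)
  dsimp only
  gcongr

lemma inv_max_mem_Icc (hL : 0 < L) (u : ℝ) : (max u L)⁻¹ ∈ Set.Icc 0 L⁻¹ :=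
  ⟨inv_nonneg.2 (hL.le.trans (le_max_right _ _)), inv_anti₀ hL (le_max_right _ _)⟩

lemma monotoneOn_min_sq_div_sub (hL : 0 < L) (hLY : L ≤ Y) :
    MonotoneOn (fun u ↦ min u L ^ 2 / Y + L ^ 2 * -(max u L)⁻¹) (Set.Ici 0) := by
  intro u (hu : 0 ≤ u) v _ huv
  have : 0 ≤ min u L := le_min hu hL.le
  have hinv := monotone_neg_inv_max hL huv
  have hY : 0 < Y := hL.trans_le hLY
  dsimp only at hinv ⊢
  gcongr

lemma abs_min_sq_div_sub_le (hL : 0 < L) (hLY : L ≤ Y) {u : ℝ} (hu : 0 ≤ u) :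
    |min u L ^ 2 / Y + L ^ 2 * -(max u L)⁻¹| ≤ L := by
  have hY : 0 < Y := hL.trans_le hLY
  have hsq : min u L ^ 2 / Y ≤ L := by
    rw [div_le_iff₀ hY]
    nlinarith [le_min hu hL.le, min_le_right u L]
  have hinv : L ^ 2 * (max u L)⁻¹ ≤ L :=
    calc L ^ 2 * (max u L)⁻¹ ≤ L ^ 2 * L⁻¹ := by
          gcongr
          exact le_max_right _ _
      _ = L := by field_simp
  have hsq₀ : 0 ≤ min u L ^ 2 / Y := by positivity
  have hinv₀ : 0 ≤ L ^ 2 * (max u L)⁻¹ := mul_nonneg (sq_nonneg L) (inv_max_mem_Icc hL u).1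
  exact abs_le.2 ⟨by linarith, by linarith⟩

lemma integral_min_sub_sub_integral (hL : 0 < L) (hLY : L ≤ Y) :
    (∫ u in 0..Y, min u L - L) - ∫ u in 0..Y, min u L ^ 2 / Y + L ^ 2 * -(max u L)⁻¹
      = L ^ 2 * (log (Y / L) - 1 / 2 + 2 * L / (3 * Y)) := by
  have hY : 0 < Y := hL.trans_le hLY
  have hcont : Continuous fun u ↦ L ^ 2 * -(max u L)⁻¹ :=
    continuous_const.mul (continuous_inv_max hL).neg
  rw [intervalIntegral.integral_sub ((by fun_prop : Continuous _).intervalIntegrable _ _)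
      (by simp), intervalIntegral.integral_add
      ((by fun_prop : Continuous fun u ↦ min u L ^ 2 / Y).intervalIntegrable _ _)
      (hcont.intervalIntegrable _ _),
    intervalIntegral.integral_div, intervalIntegral.integral_const_mul,
    intervalIntegral.integral_neg, integral_min hL.le hLY, integral_min_sq hL.le hLY,
    integral_inv_max hL hLY, intervalIntegral.integral_const]
  simp only [sub_zero, smul_eq_mul]
  field_simp
  ring

end Integrals

theorem exists_sum_inv_primesLE_le :
    ∃ C : ℝ, ∀ n : ℕ, 2 ≤ n → ∑ p ∈ n.primesLE, (p : ℝ)⁻¹ ≤ log (log n) + C := by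
  obtain ⟨C, -, hsum⟩ := exists_abs_sum_primesLE_sub_integral_le
  have hlog2 : 0 < log 2 := by positivity
  refine ⟨1 - log (log 2) + C * (log 2)⁻¹, fun n hn ↦ ?_⟩
  have hle : log 2 ≤ log n := log_le_log two_pos (by exact_mod_cast hn)
  have h := hsum (fun u ↦ -(max u (log 2))⁻¹) (log 2)⁻¹ n
    ((monotone_neg_inv_max hlog2).monotoneOn _)
    (fun u _ ↦ by
      rw [abs_neg, abs_of_nonneg (inv_max_mem_Icc hlog2 u).1]
      exact (inv_max_mem_Icc hlog2 u).2) (by lia)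
  have hterms : ∑ p ∈ n.primesLE, log p / p * -(max (log p) (log 2))⁻¹
      = -∑ p ∈ n.primesLE, (p : ℝ)⁻¹ := by
    rw [← sum_neg_distrib]
    refine sum_congr rfl fun p hp ↦ ?_
    have hp2 : log 2 ≤ log p :=
      log_le_log two_pos (by exact_mod_cast Nat.two_le_of_mem_primesLE hp)
    have : log p ≠ 0 := (hlog2.trans_le hp2).ne'
    rw [max_eq_left hp2]
    field_simp
  rw [hterms, intervalIntegral.integral_neg, integral_inv_max hlog2 hle,
    log_div (hlog2.trans_le hle).ne' hlog2.ne'] at h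
  linarith [(abs_le.1 h).1]

lemma exists_sum_primesLE_mul_sub_le :
    ∃ C : ℝ, 0 ≤ C ∧ ∀ (n : ℕ) (L : ℝ), 0 < n → 0 ≤ L → L ≤ log n →
      ∑ p ∈ n.primesLE, log p / p * max 0 (L - log p) ≤ L ^ 2 / 2 + C * L := by
  obtain ⟨C, hC, hsum⟩ := exists_abs_sum_primesLE_sub_integral_le
  refine ⟨C, hC, fun n L hn hL hLn ↦ ?_⟩
  have h := hsum (fun u ↦ min u L - L) L n
    (fun u _ v _ huv ↦ by dsimp only; gcongr)
    (fun u hu ↦ abs_le.2 ⟨by linarith [le_min hu hL], by linarith [min_le_right u L]⟩) hn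
  have hterms : ∑ p ∈ n.primesLE, log p / p * (min (log p) L - L)
      = -∑ p ∈ n.primesLE, log p / p * max 0 (L - log p) := by
    rw [← sum_neg_distrib]
    refine sum_congr rfl fun p _ ↦ ?_
    rcases le_total (log p) L with hpL | hpL
    · simp only [min_eq_left hpL, max_eq_right (sub_nonneg.2 hpL)]; ring
    · simp [hpL]
  rw [hterms, intervalIntegral.integral_sub ((by fun_prop : Continuous _).intervalIntegrable _ _)
    (by simp), integral_min hL hLn, intervalIntegral.integral_const] at h
  simp only [sub_zero, smul_eq_mul] at h
  linarith [(abs_le.1 h).1]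

lemma exists_abs_sum_primesLE_min_sq_sub_le :
    ∃ C : ℝ, 0 ≤ C ∧ ∀ (n : ℕ) (L : ℝ), 0 < L → L ≤ log n →
      |∑ p ∈ n.primesLE, (p : ℝ)⁻¹ * (1 - log p / log n) * min (log p) L ^ 2
        - L ^ 2 * (log (log n / L) - 1 / 2 + 2 * L / (3 * log n))| ≤ C * L := by
  obtain ⟨C, hC, hsum⟩ := exists_abs_sum_primesLE_sub_integral_le
  refine ⟨2 * C, by positivity, fun n L hL hLn ↦ ?_⟩
  have hY : 0 < log n := hL.trans_le hLn
  have hn : 0 < n := Nat.pos_of_ne_zero fun h ↦ by simp [h] at hY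
  -- The summand is not monotone in `log p`, but it is a difference of two monotone functions.
  set f₁ : ℝ → ℝ := fun u ↦ min u L - L
  set f₂ : ℝ → ℝ := fun u ↦ min u L ^ 2 / log n + L ^ 2 * -(max u L)⁻¹
  have h₁ := hsum f₁ L n (fun u _ v _ huv ↦ by dsimp only [f₁]; gcongr)
    (fun u hu ↦ abs_le.2 ⟨by linarith [le_min hu hL.le], by linarith [min_le_right u L]⟩) hn
  have h₂ := hsum f₂ L n (monotoneOn_min_sq_div_sub hL hLn)
    (fun u hu ↦ abs_min_sq_div_sub_le hL hLn hu) hn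
  have hterms : ∑ p ∈ n.primesLE, (p : ℝ)⁻¹ * (1 - log p / log n) * min (log p) L ^ 2
      = ∑ p ∈ n.primesLE, log p / p * f₁ (log p) - ∑ p ∈ n.primesLE, log p / p * f₂ (log p) := by
    rw [← sum_sub_distrib]
    refine sum_congr rfl fun p hp ↦ ?_
    have hlogp : 0 < log p := log_pos (by exact_mod_cast Nat.one_lt_of_mem_primesLE hp)
    dsimp only [f₁, f₂]
    rcases le_total (log p) L with hpL | hpL
    · rw [min_eq_left hpL, max_eq_right hpL]; field_simp; ring
    · rw [min_eq_right hpL, max_eq_left hpL]; field_simp; ring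
  rw [hterms, ← integral_min_sub_sub_integral hL hLn, abs_le]
  rw [abs_le] at h₁ h₂
  constructor <;> linarith [h₁.1, h₂.2]

/-- Seen as a function of `1 / x`, the left side is concave; the right side is its tangent at
`x = z`. -/
lemma neg_log_add_div_three_le {x z : ℝ} (hx : 0 < x) (hx1 : x ≤ 1) (hz : 0 < z) (hz1 : z ≤ 1) :
    -log x + x / 3 ≤ -log z + z / 3 + (z - z ^ 2 / 3) * (1 / x - 1 / z) := by
  obtain ⟨r, hr, rfl⟩ : ∃ r, 0 < r ∧ x = r * z := ⟨x / z, by positivity, by field_simp⟩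
  have hsub : (-log z + z / 3 + (z - z ^ 2 / 3) * (1 / (r * z) - 1 / z))
      - (-log (r * z) + r * z / 3) = log r - (r - 1) / r - z / 3 * ((r - 1) ^ 2 / r) := by
    rw [log_mul hr.ne' hz.ne']
    field_simp
    ring
  suffices z / 3 * ((r - 1) ^ 2 / r) ≤ log r - (r - 1) / r by linarith
  rcases le_total r 1 with hr1 | hr1
  · calc z / 3 * ((r - 1) ^ 2 / r) ≤ 1 / 2 * ((r - 1) ^ 2 / r) := by gcongr; linarith
      _ = (r - r⁻¹) / 2 - (r - 1) / r := by field_simp; ring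
      _ ≤ log r - (r - 1) / r := by
        gcongr
        rw [← sinh_log hr]
        exact sinh_le_self_iff.2 (log_nonpos hr.le hr1)
  · calc z / 3 * ((r - 1) ^ 2 / r) ≤ 1 / (r + 1) * ((r - 1) ^ 2 / r) := by
          gcongr ?_ * _
          rw [div_le_div_iff₀ three_pos (by positivity)]
          linarith
      _ = 2 * (r - 1) / (r - 1 + 2) - (r - 1) / r := by
        have : r - 1 + 2 = r + 1 := by ring
        rw [this]
        field_simp
        ring
      _ ≤ log r - (r - 1) / r := by
        gcongr
        simpa using le_log_one_add_of_nonneg (sub_nonneg.2 hr1)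

theorem exists_sum_primesLE_min_sq_le {z : ℝ} (hz : 0 < z) (hz1 : z ≤ 1) :
    ∃ C : ℝ, 0 ≤ C ∧ ∀ (R : ℕ) (L : ℝ), 0 ≤ L → L ≤ log R →
      ∑ p ∈ (R ^ 2).primesLE, (p : ℝ)⁻¹ * (1 - log p / (2 * log R)) * min (log p) L ^ 2 ≤
        (log (2 / z) - 1 / 2 + z / 3) * L ^ 2 + (z - z ^ 2 / 3) * (log R * L - L ^ 2 / z)
          + C * L := by
  obtain ⟨C, hC, hsum⟩ := exists_abs_sum_primesLE_min_sq_sub_le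
  refine ⟨C, hC, fun R L hL hLR ↦ ?_⟩
  obtain rfl | hL := hL.eq_or_lt
  · simp [min_eq_right (log_natCast_nonneg _)]
  have hR : 0 < log R := hL.trans_le hLR
  have hlog : log (R ^ 2 : ℕ) = 2 * log R := by simp
  have h := (abs_le.1 (hsum (R ^ 2) L hL (by linarith))).2
  have htangent := mul_le_mul_of_nonneg_left
    (neg_log_add_div_three_le (div_pos hL hR) ((div_le_one hR).2 hLR) hz hz1) (sq_nonneg L)
  rw [hlog, log_div (by positivity) hL.ne', log_mul two_ne_zero hR.ne'] at h
  rw [log_div hL.ne' hR.ne'] at htangent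
  rw [log_div two_ne_zero hz.ne']
  have hratio : L ^ 2 * (2 * L / (3 * (2 * log R))) = L ^ 2 * (L / log R / 3) := by field_simp
  have hinv : L ^ 2 * ((z - z ^ 2 / 3) * (1 / (L / log R) - 1 / z))
      = (z - z ^ 2 / 3) * (log R * L - L ^ 2 / z) := by field_simp
  linarith

/-! ### Roots of products of linear forms -/

section Periodic

variable {P : ℕ → Prop} [DecidablePred P] {q : ℕ}

lemma card_filter_Ico_add_mul_of_periodic (hP : Function.Periodic P q) (x k : ℕ) :
    #{n ∈ Ico x (x + k * q) | P n} = k * q.count P := by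
  induction k with
  | zero => simp
  | succ k ih =>
    have hsplit : x + (k + 1) * q = x + k * q + q := by ring
    rw [hsplit, ← Ico_union_Ico_eq_Ico (Nat.le_add_right x (k * q)) (Nat.le_add_right _ q),
      filter_union, card_union_of_disjoint
        (disjoint_filter_filter (Ico_disjoint_Ico_consecutive _ _ _)), ih,
      Nat.filter_Ico_card_eq_of_periodic _ _ _ hP]
    ring

lemma abs_card_filter_Ico_sub_le_of_periodic (hP : Function.Periodic P q) (hq : 0 < q)
    (x N : ℕ) : |(#{n ∈ Ico x (x + N) | P n} : ℝ) - N * (q.count P / q)| ≤ q.count P := by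
  have hcount {y z : ℕ} (hyz : y ≤ z) : #{n ∈ Ico x y | P n} ≤ #{n ∈ Ico x z | P n} :=
    card_le_card (filter_subset_filter _ (Ico_subset_Ico_right hyz))
  have hlower : N / q * q.count P ≤ #{n ∈ Ico x (x + N) | P n} := by
    rw [← card_filter_Ico_add_mul_of_periodic hP x]
    exact hcount (by have := Nat.div_mul_le_self N q; lia)
  have hupper : #{n ∈ Ico x (x + N) | P n} ≤ (N / q + 1) * q.count P := by
    rw [← card_filter_Ico_add_mul_of_periodic hP x]
    exact hcount (by have := Nat.lt_div_mul_add (a := N) hq; lia)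
  have hdiv : ((N / q : ℕ) : ℝ) ≤ N / q := Nat.cast_div_le
  have hdiv' : (N / q : ℝ) ≤ (N / q : ℕ) + 1 := by
    rw [← Nat.floor_div_eq_div (K := ℝ)]
    exact (Nat.lt_floor_add_one _).le
  have hlower' : ((N / q : ℕ) : ℝ) * q.count P ≤ #{n ∈ Ico x (x + N) | P n} := by
    exact_mod_cast hlower
  have hupper' : (#{n ∈ Ico x (x + N) | P n} : ℝ) ≤ ((N / q : ℕ) + 1) * q.count P := by
    exact_mod_cast hupper
  have : (0 : ℝ) ≤ q.count P := Nat.cast_nonneg _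
  rw [mul_div_left_comm, mul_comm, abs_le]
  constructor <;> nlinarith

end Periodic

/-- The number of residue classes `n` modulo `q` with `q ∣ F n`; it is meant for functions `F`,
such as polynomials, for which this condition only depends on `n` modulo `q`. -/
def rootCount (F : ℕ → ℕ) (q : ℕ) : ℕ := q.count fun n ↦ q ∣ F n

lemma rootCount_eq_card (F : ℕ → ℕ) (q : ℕ) : rootCount F q = #{n ∈ range q | q ∣ F n} :=
  Nat.count_eq_card_filter_range _ _

lemma rootCount_mul {F : ℕ → ℕ} (hF : ∀ q, Function.Periodic (fun n ↦ q ∣ F n) q) {q r : ℕ}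
    (hqr : q.Coprime r) (hq : 0 < q) (hr : 0 < r) :
    rootCount F (q * r) = rootCount F q * rootCount F r := by
  have hmod (q n : ℕ) : q ∣ F (n % q) ↔ q ∣ F n := ((hF q).map_mod_nat n).to_iff
  simp only [rootCount_eq_card, ← card_product]
  refine card_bij (fun n _ ↦ (n % q, n % r)) ?_ ?_ ?_
  · simp only [mem_filter, mem_range, mem_product]
    exact fun n hn ↦ ⟨⟨n.mod_lt hq, (hmod q n).2 (dvd_of_mul_right_dvd hn.2)⟩,
      ⟨n.mod_lt hr, (hmod r n).2 (dvd_of_mul_left_dvd hn.2)⟩⟩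
  · simp only [mem_filter, mem_range, Prod.mk.injEq]
    exact fun n hn k hk hnk ↦
      ((Nat.modEq_and_modEq_iff_modEq_mul hqr).1 hnk).eq_of_lt_of_lt hn.1 hk.1
  · simp only [mem_filter, mem_range, mem_product, Prod.forall, and_imp]
    intro x y hx hxF hy hyF
    obtain ⟨k, hkx, hky⟩ := Nat.chineseRemainder hqr x y
    have hkq : k % (q * r) % q = x := by
      rw [Nat.mod_mul_right_mod]
      exact Eq.trans hkx (Nat.mod_eq_of_lt hx)
    have hkr : k % (q * r) % r = y := by
      rw [Nat.mod_mul_left_mod]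
      exact Eq.trans hky (Nat.mod_eq_of_lt hy)
    refine ⟨k % (q * r), ⟨Nat.mod_lt _ (by positivity), hqr.mul_dvd_of_dvd_of_dvd ?_ ?_⟩,
      by rw [hkq, hkr]⟩
    · rwa [← hmod, hkq]
    · rwa [← hmod, hkr]

/-- The setting of the sieve: `F` has sieve dimension `κ` outside the primes dividing `m`. -/
structure HasSieveDimension (F : ℕ → ℕ) (m κ : ℕ) : Prop where
  dim_ne_zero : κ ≠ 0
  ne_zero (n : ℕ) : F n ≠ 0
  coprime (n : ℕ) : (F n).Coprime m
  periodic (q : ℕ) : Function.Periodic (fun n ↦ q ∣ F n) q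
  dvd_of_le {p : ℕ} (hp : p.Prime) (hpκ : p ≤ κ) : p ∣ m
  rootCount_prime_pow {p a : ℕ} (hp : p.Prime) (hpm : ¬p ∣ m) (ha : a ≠ 0) :
    rootCount F (p ^ a) = κ

namespace HasSieveDimension

open ArithmeticFunction.omega

variable {F : ℕ → ℕ} {m κ : ℕ}

lemma rootCount_eq_pow (hF : HasSieveDimension F m κ) {q : ℕ} (hq : q ≠ 0) (hqm : q.Coprime m) :
    rootCount F q = κ ^ ω q := by
  induction q using Nat.recOnPosPrimePosCoprime with
  | prime_pow p n hp hn =>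
    rw [ArithmeticFunction.cardDistinctFactors_apply_prime_pow hp hn.ne', pow_one]
    exact hF.rootCount_prime_pow hp
      (hp.coprime_iff_not_dvd.1 (hqm.coprime_dvd_left (dvd_pow_self p hn.ne'))) hn.ne'
  | zero => exact absurd rfl hq
  | one => simp [rootCount]
  | coprime a b ha hb hab iha ihb =>
    rw [rootCount_mul hF.periodic hab (by lia) (by lia),
      iha (by lia) (hqm.coprime_dvd_left (dvd_mul_right a b)),
      ihb (by lia) (hqm.coprime_dvd_left (dvd_mul_left b a)), ← pow_add,
      ← ArithmeticFunction.cardDistinctFactors_mul hab]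

lemma abs_card_dvd_sub_le (hF : HasSieveDimension F m κ) {q : ℕ} (hq : q ≠ 0)
    (hqm : q.Coprime m) (x N : ℕ) :
    |(#{n ∈ Ico x (x + N) | q ∣ F n} : ℝ) - N * (κ ^ ω q / q)| ≤ κ ^ ω q := by
  have h := abs_card_filter_Ico_sub_le_of_periodic (hF.periodic q) (Nat.pos_of_ne_zero hq) x N
  have hroot : q.count (fun n ↦ q ∣ F n) = κ ^ ω q := hF.rootCount_eq_pow hq hqm
  rwa [hroot, Nat.cast_pow] at h

end HasSieveDimension

lemma prime_pow_dvd_prod_iff {ι : Type*} {s : Finset ι} {f : ι → ℕ} {p a : ℕ} (hp : p.Prime)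
    (ha : a ≠ 0) (hf : ∀ i ∈ s, ∀ j ∈ s, i ≠ j → p ∣ f i → ¬p ∣ f j) :
    p ^ a ∣ ∏ i ∈ s, f i ↔ ∃ i ∈ s, p ^ a ∣ f i := by
  refine ⟨fun h ↦ ?_, fun ⟨i, hi, h⟩ ↦ h.trans (dvd_prod_of_mem f hi)⟩
  classical
  obtain ⟨i, hi, hpi⟩ := (hp.prime.dvd_finsetProd_iff f).1 ((dvd_pow_self p ha).trans h)
  refine ⟨i, hi, Nat.Coprime.dvd_of_dvd_mul_right (n := ∏ j ∈ s.erase i, f j) ?_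
    (by rwa [mul_prod_erase s f hi])⟩
  refine Nat.Coprime.prod_right fun j hj ↦ ?_
  exact ((hp.coprime_iff_not_dvd).2 (hf i hi j (mem_of_mem_erase hj)
    (ne_of_mem_erase hj).symm hpi)).pow_left a

lemma rootCount_linear {a q : ℕ} (b : ℕ) (haq : a.Coprime q) (hq : 0 < q) :
    rootCount (fun n ↦ a * n + b) q = 1 := by
  have := NeZero.mk hq.ne'
  obtain ⟨u, hu⟩ : IsUnit (a : ZMod q) := (ZMod.isUnit_iff_coprime a q).2 haq
  set x : ZMod q := -(↑u⁻¹ * b)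
  have hroot (n : ℕ) : q ∣ a * n + b ↔ (n : ZMod q) = x := by
    rw [← ZMod.natCast_eq_zero_iff, Nat.cast_add, Nat.cast_mul, ← hu, add_eq_zero_iff_eq_neg,
      ← Units.eq_inv_mul_iff_mul_eq, mul_neg]
  rw [rootCount_eq_card, card_eq_one]
  refine ⟨x.val, ext fun n ↦ ?_⟩
  simp only [mem_filter, mem_range, mem_singleton, hroot]
  constructor
  · rintro ⟨hn, hnx⟩
    rw [← hnx, ZMod.val_cast_of_lt hn]
  · rintro rfl
    exact ⟨ZMod.val_lt x, by simp⟩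

section LinearForms

variable {ι : Type*} [Fintype ι] {a b : ι → ℕ} {p : ℕ}

lemma periodic_dvd_prod_linear (a b : ι → ℕ) (q : ℕ) :
    Function.Periodic (fun n ↦ q ∣ ∏ i, (a i * n + b i)) q := fun n ↦ by
  simp [← ZMod.natCast_eq_zero_iff]

lemma not_dvd_linear_of_dvd_linear {a b a' b' n : ℕ} (hdet : ¬(p : ℤ) ∣ a * b' - a' * b)
    (h : p ∣ a * n + b) : ¬p ∣ a' * n + b' := fun h' ↦ by
  refine hdet ?_
  have hcomb : (a * b' - a' * b : ℤ) = a * (a' * n + b' : ℕ) - a' * (a * n + b : ℕ) := by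
    push_cast
    ring
  rw [hcomb]
  exact dvd_sub ((Int.natCast_dvd_natCast.2 h').mul_left _)
    ((Int.natCast_dvd_natCast.2 h).mul_left _)

lemma rootCount_prod_linear_prime_pow (hp : p.Prime) (ha : ∀ i, ¬p ∣ a i)
    (hdet : ∀ i j, i ≠ j → ¬(p : ℤ) ∣ a i * b j - a j * b i) {k : ℕ} (hk : k ≠ 0) :
    rootCount (fun n ↦ ∏ i, (a i * n + b i)) (p ^ k) = Fintype.card ι := by
  classical
  have hdisjoint (n : ℕ) (i j : ι) (hij : i ≠ j) :
      p ∣ a i * n + b i → ¬p ∣ a j * n + b j := not_dvd_linear_of_dvd_linear (hdet i j hij)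
  have hunion : {n ∈ range (p ^ k) | p ^ k ∣ ∏ i, (a i * n + b i)}
      = univ.biUnion fun i ↦ {n ∈ range (p ^ k) | p ^ k ∣ a i * n + b i} := by
    ext n
    simp [prime_pow_dvd_prod_iff hp hk fun i _ j _ ↦ hdisjoint n i j]
  have hlinear (i : ι) : #{n ∈ range (p ^ k) | p ^ k ∣ a i * n + b i} = 1 := by
    rw [← rootCount_eq_card, rootCount_linear (b i)
      ((hp.coprime_iff_not_dvd.2 (ha i)).symm.pow_right k) (pow_pos hp.pos k)]
  rw [rootCount_eq_card, hunion, card_biUnion]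
  · simp [hlinear]
  · intro i _ j _ hij
    refine disjoint_left.2 fun n hi hj ↦ hdisjoint n i j hij ?_ ?_
    · exact (dvd_pow_self p hk).trans (mem_filter.1 hi).2
    · exact (dvd_pow_self p hk).trans (mem_filter.1 hj).2

lemma hasSieveDimension_prod_linear [Nonempty ι] {m : ℕ} (hb : ∀ i, b i ≠ 0) (hma : ∀ i, m ∣ a i)
    (hbm : ∀ i, (b i).Coprime m) (hsmall : ∀ p, p.Prime → p ≤ Fintype.card ι → p ∣ m)
    (ha : ∀ p, p.Prime → ∀ i, p ∣ a i → p ∣ m)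
    (hdet : ∀ p : ℕ, p.Prime → ∀ i j, i ≠ j → (p : ℤ) ∣ a i * b j - a j * b i → p ∣ m) :
    HasSieveDimension (fun n ↦ ∏ i, (a i * n + b i)) m (Fintype.card ι) where
  dim_ne_zero := Fintype.card_ne_zero
  ne_zero n := prod_ne_zero_iff.2 fun i _ ↦ (Nat.add_pos_right _ (Nat.pos_of_ne_zero (hb i))).ne'
  coprime n := Nat.Coprime.prod_left fun i _ ↦ by
    obtain ⟨c, hc⟩ := hma i
    rw [hc, mul_assoc]
    simpa using hbm i
  periodic := periodic_dvd_prod_linear a b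
  dvd_of_le hp := hsmall _ hp
  rootCount_prime_pow hp hpm hk := rootCount_prod_linear_prime_pow hp
    (fun i h ↦ hpm (ha _ hp i h)) (fun i j hij h ↦ hpm (hdet _ hp i j hij h)) hk

lemma prod_linear_le {n : ℕ} (hn : n ≠ 0) :
    ∏ i, (a i * n + b i) ≤ (∏ i, (a i + b i)) * n ^ Fintype.card ι := by
  rw [← card_univ, ← prod_const, ← prod_mul_distrib]
  refine prod_le_prod' fun i _ ↦ ?_
  rw [add_mul]
  exact Nat.add_le_add_left (Nat.le_mul_of_pos_right _ (Nat.pos_of_ne_zero hn)) _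

end LinearForms

/-! ### Selberg weights -/

open scoped ArithmeticFunction.Moebius

lemma sum_divisors_mul_filter_dvd {M : Type*} [AddCommMonoid M] {r : ℕ} (hr : r ≠ 0) (n : ℕ)
    (f : ℕ → M) : ∑ d ∈ (r * n).divisors with r ∣ d, f d = ∑ d ∈ n.divisors, f (r * d) := by
  symm
  refine sum_bij (fun d _ ↦ r * d) ?_ (fun _ _ _ _ ↦ Nat.eq_of_mul_eq_mul_left (by lia)) ?_
    fun _ _ ↦ rfl
  · simp only [Nat.mem_divisors, mem_filter]
    exact fun d hd ↦ ⟨⟨mul_dvd_mul_left r hd.1, mul_ne_zero hr hd.2⟩, dvd_mul_right r d⟩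
  · simp only [Nat.mem_divisors, mem_filter]
    rintro _ ⟨⟨hd, hn⟩, c, rfl⟩
    exact ⟨c, ⟨Nat.dvd_of_mul_dvd_mul_left (by lia) hd, right_ne_zero_of_mul hn⟩, rfl⟩

lemma sum_divisors_prime_mul {M : Type*} [AddCommMonoid M] {p n : ℕ} (hp : p.Prime)
    (hpn : ¬p ∣ n) (f : ℕ → M) :
    ∑ d ∈ (p * n).divisors, f d = ∑ d ∈ n.divisors, (f d + f (p * d)) := by
  have hnot : {d ∈ (p * n).divisors | ¬p ∣ d} = n.divisors := by
    ext d
    simp only [mem_filter, Nat.mem_divisors, ne_eq, mul_eq_zero, hp.ne_zero, false_or]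
    refine ⟨fun ⟨⟨hd, hn⟩, hpd⟩ ↦ ⟨?_, hn⟩,
      fun ⟨hd, hn⟩ ↦ ⟨⟨hd.mul_left p, hn⟩, fun hpd ↦ hpn (hpd.trans hd)⟩⟩
    exact ((hp.coprime_iff_not_dvd.2 hpd).symm).dvd_of_dvd_mul_left hd
  rw [← sum_filter_not_add_sum_filter _ (p ∣ ·), hnot, sum_divisors_mul_filter_dvd hp.ne_zero,
    sum_add_distrib]

lemma sum_moebius_divisors_filter_dvd {k : ℕ} (hk : Squarefree k) (r : ℕ) :
    ∑ d ∈ k.divisors with r ∣ d, μ d = if k = r then μ r else 0 := by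
  by_cases hrk : r ∣ k
  · obtain ⟨n, rfl⟩ := hrk
    have hr := left_ne_zero_of_mul hk.ne_zero
    have hmul (d : ℕ) (hd : d ∈ n.divisors) : μ (r * d) = μ r * μ d :=
      ArithmeticFunction.isMultiplicative_moebius.map_mul_of_coprime
        ((Nat.coprime_of_squarefree_mul hk).coprime_dvd_right (Nat.dvd_of_mem_divisors hd))
    rw [sum_divisors_mul_filter_dvd hr, sum_congr rfl hmul, ← mul_sum,
      ← ArithmeticFunction.coe_mul_zeta_apply, ArithmeticFunction.moebius_mul_coe_zeta,
      ArithmeticFunction.one_apply]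
    simp [hr]
  · rw [if_neg (by rintro rfl; exact hrk dvd_rfl), filter_eq_empty_iff.2, sum_empty]
    exact fun d hd hrd ↦ hrk (hrd.trans (Nat.dvd_of_mem_divisors hd))

/-- The Selberg sieve weights `w d` that diagonalise to `∑ h(k) y(k)²`, where `h` is
`BoundingSieve.selbergTerms`: they are obtained from the variables `y` by Möbius inversion. -/
noncomputable def selbergWeight (s : BoundingSieve) (y : ℕ → ℝ) (d : ℕ) : ℝ :=
  μ d * (s.nu d)⁻¹ * ∑ k ∈ s.prodPrimes.divisors with d ∣ k, s.selbergTerms k * y k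

section Selberg

variable (s : BoundingSieve) (y w : ℕ → ℝ)

lemma sum_nu_mul_selbergWeight {r : ℕ} (hr : r ∣ s.prodPrimes) :
    ∑ d ∈ s.prodPrimes.divisors with r ∣ d, s.nu d * selbergWeight s y d
      = μ r * (s.selbergTerms r * y r) := by
  have hP := s.prodPrimes_ne_zero
  have hcancel (d : ℕ) (hd : d ∈ s.prodPrimes.divisors) : s.nu d * selbergWeight s y d
      = ∑ k ∈ s.prodPrimes.divisors with d ∣ k, μ d * (s.selbergTerms k * y k) := by
    rw [selbergWeight, ← mul_sum, mul_comm (μ d : ℝ), mul_assoc,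
      mul_inv_cancel_left₀ (s.nu_ne_zero (Nat.dvd_of_mem_divisors hd))]
  have hmoebius (k : ℕ) (hk : k ∈ s.prodPrimes.divisors) :
      ∑ d ∈ s.prodPrimes.divisors with r ∣ d ∧ d ∣ k, (μ d : ℝ)
        = if k = r then (μ r : ℝ) else 0 := by
    simp only [and_comm (a := r ∣ _)]
    rw [← filter_filter,
      Nat.divisors_filter_dvd_of_dvd hP (Nat.dvd_of_mem_divisors hk)]
    exact_mod_cast sum_moebius_divisors_filter_dvd
      (s.squarefree_of_mem_divisors_prodPrimes hk) r
  calc ∑ d ∈ s.prodPrimes.divisors with r ∣ d, s.nu d * selbergWeight s y d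
      = ∑ k ∈ s.prodPrimes.divisors, ∑ d ∈ s.prodPrimes.divisors with r ∣ d ∧ d ∣ k,
          (μ d : ℝ) * (s.selbergTerms k * y k) := by
        rw [sum_congr rfl fun d hd ↦ hcancel d (mem_filter.1 hd).1]
        exact sum_comm' fun d k ↦ by simp only [mem_filter]; tauto
    _ = ∑ k ∈ s.prodPrimes.divisors,
          if k = r then (μ r : ℝ) * (s.selbergTerms r * y r) else 0 := by
        refine sum_congr rfl fun k hk ↦ ?_
        rw [← sum_mul, hmoebius k hk]
        split_ifs with hkr
        · rw [hkr]
        · rw [zero_mul]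
    _ = μ r * (s.selbergTerms r * y r) := by
        rw [sum_ite_eq', if_pos (Nat.mem_divisors.2 ⟨hr, hP⟩)]

lemma sum_sum_mul_nu_lcm :
    ∑ d ∈ s.prodPrimes.divisors, ∑ e ∈ s.prodPrimes.divisors, w d * w e * s.nu (d.lcm e)
      = ∑ r ∈ s.prodPrimes.divisors, (s.selbergTerms r)⁻¹
          * (∑ d ∈ s.prodPrimes.divisors with r ∣ d, s.nu d * w d) ^ 2 := by
  simp only [sum_filter]
  rw [← s.mainSum_lambdaSquared_eq_sum_mul_sum_sq, s.mainSum_lambdaSquared_eq_sum_sum_mul]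
  refine sum_congr rfl fun d hd ↦ sum_congr rfl fun e _ ↦ ?_
  rw [s.nu_mult.map_lcm (s.nu_ne_zero ((Nat.gcd_dvd_left d e).trans (Nat.dvd_of_mem_divisors hd)))]
  ring

lemma inv_selbergTerms_mul_moebius_mul_sq {r : ℕ} (hr : r ∣ s.prodPrimes) (x : ℝ) :
    (s.selbergTerms r)⁻¹ * (μ r * (s.selbergTerms r * x)) ^ 2 = s.selbergTerms r * x ^ 2 := by
  have hmoebius : (μ r : ℝ) ^ 2 = 1 := by
    exact_mod_cast
      ArithmeticFunction.moebius_sq_eq_one_of_squarefree (s.squarefree_of_dvd_prodPrimes hr)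
  have hterm := (s.selbergTerms_pos hr).ne'
  rw [mul_pow, hmoebius]
  field_simp

lemma sum_sum_selbergWeight_mul_nu_lcm :
    ∑ d ∈ s.prodPrimes.divisors, ∑ e ∈ s.prodPrimes.divisors,
        selbergWeight s y d * selbergWeight s y e * s.nu (d.lcm e)
      = ∑ r ∈ s.prodPrimes.divisors, s.selbergTerms r * y r ^ 2 := by
  rw [sum_sum_mul_nu_lcm]
  refine sum_congr rfl fun r hr ↦ ?_
  rw [sum_nu_mul_selbergWeight s y (Nat.dvd_of_mem_divisors hr),
    inv_selbergTerms_mul_moebius_mul_sq s (Nat.dvd_of_mem_divisors hr)]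

/-- The sieve obtained by no longer sifting by the primes that do not divide `Q`. -/
def restrictSieve {Q : ℕ} (hQ : Q ∣ s.prodPrimes) : BoundingSieve :=
  { s with
    prodPrimes := Q
    prodPrimes_squarefree := s.squarefree_of_dvd_prodPrimes hQ
    nu_pos_of_prime := fun p hp hpQ ↦ s.nu_pos_of_prime p hp (hpQ.trans hQ)
    nu_lt_one_of_prime := fun p hp hpQ ↦ s.nu_lt_one_of_prime p hp (hpQ.trans hQ) }

lemma lcm_prime_pow_prime_mul {p a d : ℕ} (hp : p.Prime) (ha : a ≠ 0) (hpd : ¬p ∣ d) :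
    (p ^ a).lcm (p * d) = (p ^ a).lcm d := by
  refine Nat.dvd_antisymm (Nat.lcm_dvd (Nat.dvd_lcm_left _ _) ?_)
    (Nat.lcm_dvd (Nat.dvd_lcm_left _ _) ((dvd_mul_left d p).trans (Nat.dvd_lcm_right _ _)))
  exact (hp.coprime_iff_not_dvd.2 hpd).mul_dvd_of_dvd_of_dvd
    ((dvd_pow_self p ha).trans (Nat.dvd_lcm_left _ _)) (Nat.dvd_lcm_right _ _)

lemma lcm_lcm_eq_lcm_lcm_lcm (q d e : ℕ) : q.lcm (d.lcm e) = (q.lcm d).lcm (q.lcm e) := by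
  rw [Nat.lcm_assoc, ← Nat.lcm_assoc d, Nat.lcm_comm d q, Nat.lcm_assoc q d, ← Nat.lcm_assoc q q,
    Nat.lcm_self]

variable {s} {p Q : ℕ}

lemma sum_sum_mul_nu_lcm_prime_pow (hp : p.Prime) (hP : s.prodPrimes = p * Q) {a : ℕ}
    (ha : a ≠ 0) :
    ∑ d ∈ s.prodPrimes.divisors, ∑ e ∈ s.prodPrimes.divisors,
        w d * w e * s.nu ((p ^ a).lcm (d.lcm e))
      = s.nu (p ^ a) * ∑ d ∈ Q.divisors, ∑ e ∈ Q.divisors,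
          (w d + w (p * d)) * (w e + w (p * e)) * s.nu (d.lcm e) := by
  have hcop : p.Coprime Q := Nat.coprime_of_squarefree_mul (hP ▸ s.prodPrimes_squarefree)
  have hpd {d : ℕ} (hd : d ∈ Q.divisors) : p.Coprime d :=
    hcop.coprime_dvd_right (Nat.dvd_of_mem_divisors hd)
  have hdvd {d : ℕ} (hd : d ∈ Q.divisors) : ¬p ∣ d := hp.coprime_iff_not_dvd.1 (hpd hd)
  simp only [hP, sum_divisors_prime_mul hp (hp.coprime_iff_not_dvd.1 hcop), mul_sum,
    ← sum_add_distrib]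
  refine sum_congr rfl fun d hd ↦ sum_congr rfl fun e he ↦ ?_
  have hnu : s.nu ((p ^ a).lcm (d.lcm e)) = s.nu (p ^ a) * s.nu (d.lcm e) := by
    have hlcm : (p ^ a).Coprime (d.lcm e) :=
      Nat.Coprime.pow_left a (((hpd hd).mul_right (hpd he)).coprime_dvd_right (Nat.lcm_dvd_mul d e))
    rw [hlcm.lcm_eq_mul, s.nu_mult.map_mul_of_coprime hlcm]
  rw [lcm_lcm_eq_lcm_lcm_lcm] at hnu
  rw [lcm_lcm_eq_lcm_lcm_lcm _ d e, lcm_lcm_eq_lcm_lcm_lcm _ (p * d) e,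
    lcm_lcm_eq_lcm_lcm_lcm _ d (p * e), lcm_lcm_eq_lcm_lcm_lcm _ (p * d) (p * e),
    lcm_prime_pow_prime_mul hp ha (hdvd hd), lcm_prime_pow_prime_mul hp ha (hdvd he), hnu]
  ring

lemma selbergTerms_prime (hp : p.Prime) : s.selbergTerms p = s.nu p * (1 - s.nu p)⁻¹ := by
  rw [s.selbergTerms_apply, hp.primeFactors, prod_singleton]

lemma sum_nu_mul_selbergWeight_add (hp : p.Prime) (hP : s.prodPrimes = p * Q) {r : ℕ}
    (hr : r ∣ Q) :
    ∑ d ∈ Q.divisors with r ∣ d, s.nu d * (selbergWeight s y d + selbergWeight s y (p * d))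
      = μ r * (s.selbergTerms r * (y r - y (p * r))) := by
  have hcop : p.Coprime Q := Nat.coprime_of_squarefree_mul (hP ▸ s.prodPrimes_squarefree)
  have hpr : p.Coprime r := hcop.coprime_dvd_right hr
  have hpQ : ¬p ∣ Q := hp.coprime_iff_not_dvd.1 hcop
  have hpP : p ∣ s.prodPrimes := hP ▸ dvd_mul_right p Q
  have hmul {d : ℕ} (hd : d ∈ Q.divisors) : s.nu (p * d) = s.nu p * s.nu d :=
    s.nu_mult.map_mul_of_coprime (hcop.coprime_dvd_right (Nat.dvd_of_mem_divisors hd))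
  have hQ (f : ℕ → ℝ) (k : ℕ) : ∑ d ∈ s.prodPrimes.divisors with k ∣ d, f d
      = ∑ d ∈ Q.divisors with k ∣ d, f d + ∑ d ∈ Q.divisors with k ∣ p * d, f (p * d) := by
    simp only [sum_filter]
    rw [hP, sum_divisors_prime_mul hp hpQ, sum_add_distrib]
  have hrmul (d : ℕ) : r ∣ p * d ↔ r ∣ d := hpr.symm.dvd_mul_left
  have hprmul (d : ℕ) : p * r ∣ p * d ↔ r ∣ d := Nat.mul_dvd_mul_iff_left hp.pos
  have hnone : {d ∈ Q.divisors | p * r ∣ d} = ∅ := filter_eq_empty_iff.2 fun d hd hprd ↦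
    hpQ ((dvd_of_mul_right_dvd hprd).trans (Nat.dvd_of_mem_divisors hd))
  have hsum := sum_nu_mul_selbergWeight s y (hr.trans (hP ▸ dvd_mul_left Q p))
  have hsum' := sum_nu_mul_selbergWeight s y (hP ▸ mul_dvd_mul_left p hr)
  rw [hQ] at hsum hsum'
  simp only [hrmul] at hsum
  simp only [hprmul, hnone, sum_empty, zero_add] at hsum'
  rw [s.selbergTerms_isMultiplicative.map_mul_of_coprime hpr,
    ArithmeticFunction.isMultiplicative_moebius.map_mul_of_coprime hpr,
    ArithmeticFunction.moebius_apply_prime hp, selbergTerms_prime hp] at hsum'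
  have hpull : ∑ d ∈ Q.divisors with r ∣ d, s.nu (p * d) * selbergWeight s y (p * d)
      = s.nu p * ∑ d ∈ Q.divisors with r ∣ d, s.nu d * selbergWeight s y (p * d) := by
    rw [mul_sum]
    exact sum_congr rfl fun d hd ↦ by rw [hmul (mem_filter.1 hd).1, mul_assoc]
  have hnu := (s.nu_pos_of_prime p hp hpP).ne'
  have hnu' := (sub_pos.2 (s.nu_lt_one_of_prime p hp hpP)).ne'
  rw [hpull] at hsum hsum'
  simp only [mul_add, sum_add_distrib]
  have hB : ∑ d ∈ Q.divisors with r ∣ d, s.nu d * selbergWeight s y (p * d)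
      = -(μ r * (s.selbergTerms r * y (p * r))) * (1 - s.nu p)⁻¹ := by
    refine mul_left_cancel₀ hnu (hsum'.trans ?_)
    push_cast
    ring
  rw [hB] at hsum ⊢
  field_simp at hsum ⊢
  linarith

lemma sum_sum_selbergWeight_mul_nu_lcm_prime_pow_le (hp : p.Prime) (hpP : p ∣ s.prodPrimes)
    {a : ℕ} (ha : a ≠ 0) (hnu : 0 ≤ s.nu (p ^ a)) :
    ∑ d ∈ s.prodPrimes.divisors, ∑ e ∈ s.prodPrimes.divisors,
        selbergWeight s y d * selbergWeight s y e * s.nu ((p ^ a).lcm (d.lcm e))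
      ≤ s.nu (p ^ a) * ∑ r ∈ s.prodPrimes.divisors, s.selbergTerms r * (y r - y (p * r)) ^ 2 := by
  obtain ⟨Q, hP⟩ := hpP
  have hQ : Q ∣ s.prodPrimes := hP ▸ dvd_mul_left Q p
  rw [sum_sum_mul_nu_lcm_prime_pow _ hp hP ha]
  refine mul_le_mul_of_nonneg_left ?_ hnu
  refine ((sum_sum_mul_nu_lcm (restrictSieve s hQ) _).trans (sum_congr rfl fun r hr ↦ ?_)).trans_le
    (sum_le_sum_of_subset_of_nonneg (Nat.divisors_subset_of_dvd s.prodPrimes_ne_zero hQ)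
      fun r hr _ ↦ mul_nonneg (s.selbergTerms_pos (Nat.dvd_of_mem_divisors hr)).le (sq_nonneg _))
  have hrQ : r ∣ Q := Nat.dvd_of_mem_divisors hr
  have hsum := sum_nu_mul_selbergWeight_add y hp hP hrQ
  exact (congrArg (fun x ↦ (s.selbergTerms r)⁻¹ * x ^ 2) hsum).trans
    (inv_selbergTerms_mul_moebius_mul_sq s (hrQ.trans hQ) _)

/-- The sum over the multiples `n` of `q` in the support of a sieve, weighted by the square of the
divisor sum of `w`. -/
noncomputable def squareSum (s : BoundingSieve) (w : ℕ → ℝ) (q : ℕ) : ℝ :=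
  ∑ n ∈ s.support with q ∣ n, s.weights n * (∑ d ∈ s.prodPrimes.divisors with d ∣ n, w d) ^ 2

lemma squareSum_eq_sum_sum (s : BoundingSieve) (q : ℕ) :
    squareSum s w q = ∑ d ∈ s.prodPrimes.divisors, ∑ e ∈ s.prodPrimes.divisors,
      w d * w e * s.multSum (q.lcm (d.lcm e)) := by
  have hsq (n : ℕ) : (∑ d ∈ s.prodPrimes.divisors with d ∣ n, w d) ^ 2
      = ∑ d ∈ s.prodPrimes.divisors, ∑ e ∈ s.prodPrimes.divisors,
          if d ∣ n ∧ e ∣ n then w d * w e else 0 := by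
    rw [sum_filter, sq, sum_mul_sum]
    refine sum_congr rfl fun d _ ↦ sum_congr rfl fun e _ ↦ ?_
    by_cases hd : d ∣ n <;> by_cases he : e ∣ n <;> simp [hd, he]
  simp only [squareSum, hsq, mul_sum, BoundingSieve.multSum]
  rw [sum_comm]
  refine sum_congr rfl fun d _ ↦ ?_
  rw [sum_comm]
  refine sum_congr rfl fun e _ ↦ ?_
  rw [sum_filter]
  refine sum_congr rfl fun n _ ↦ ?_
  simp only [Nat.lcm_dvd_iff]
  by_cases hq : q ∣ n <;> by_cases hde : d ∣ n ∧ e ∣ n <;> simp [hq, hde, mul_comm]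

lemma abs_squareSum_sub_le {q : ℕ} {c : ℝ} {ρ : ℕ → ℝ}
    (hrem : ∀ d ∈ s.prodPrimes.divisors, ∀ e ∈ s.prodPrimes.divisors,
      |s.rem (q.lcm (d.lcm e))| ≤ c * (ρ d * ρ e)) :
    |squareSum s w q - s.totalMass * ∑ d ∈ s.prodPrimes.divisors, ∑ e ∈ s.prodPrimes.divisors,
        w d * w e * s.nu (q.lcm (d.lcm e))|
      ≤ c * (∑ d ∈ s.prodPrimes.divisors, |w d| * ρ d) ^ 2 := by
  have hdiff : squareSum s w q - s.totalMass * ∑ d ∈ s.prodPrimes.divisors,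
        ∑ e ∈ s.prodPrimes.divisors, w d * w e * s.nu (q.lcm (d.lcm e))
      = ∑ d ∈ s.prodPrimes.divisors, ∑ e ∈ s.prodPrimes.divisors,
          w d * w e * s.rem (q.lcm (d.lcm e)) := by
    simp only [squareSum_eq_sum_sum, BoundingSieve.rem, mul_sub, sum_sub_distrib, mul_sum]
    congr 1
    exact sum_congr rfl fun d _ ↦ sum_congr rfl fun e _ ↦ by ring
  rw [hdiff, sq, sum_mul_sum, mul_sum]
  refine (abs_sum_le_sum_abs _ _).trans (sum_le_sum fun d hd ↦ ?_)
  rw [mul_sum]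
  refine (abs_sum_le_sum_abs _ _).trans (sum_le_sum fun e he ↦ ?_)
  rw [abs_mul, abs_mul]
  calc |w d| * |w e| * |s.rem (q.lcm (d.lcm e))|
      ≤ |w d| * |w e| * (c * (ρ d * ρ e)) := by gcongr; exact hrem d hd e he
    _ = c * (|w d| * ρ d * (|w e| * ρ e)) := by ring

lemma sum_divisors_selbergTerms {d : ℕ} (hd : d ∣ s.prodPrimes) :
    ∑ r ∈ d.divisors, s.selbergTerms r = s.selbergTerms d * (s.nu d)⁻¹ := by
  rw [← s.sum_divisors_selbergTerms_eq_selbergTerms_mul_nu_inv hd, ← sum_filter,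
    Nat.divisors_filter_dvd_of_dvd s.prodPrimes_ne_zero hd]

lemma selbergTerms_nonneg_of_mem {r : ℕ} (hr : r ∈ s.prodPrimes.divisors) :
    0 ≤ s.selbergTerms r :=
  (s.selbergTerms_pos (Nat.dvd_of_mem_divisors hr)).le

lemma sum_filter_dvd_selbergTerms {d : ℕ} (hd : d ∣ s.prodPrimes) :
    ∑ r ∈ s.prodPrimes.divisors with d ∣ r, s.selbergTerms r
      = s.nu d * ∑ r ∈ s.prodPrimes.divisors, s.selbergTerms r := by
  obtain ⟨Q, hP⟩ := hd
  have hd : d ∣ s.prodPrimes := hP ▸ dvd_mul_right d Q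
  have hQ : Q ∣ s.prodPrimes := hP ▸ dvd_mul_left Q d
  have hcop : d.Coprime Q := Nat.coprime_of_squarefree_mul (hP ▸ s.prodPrimes_squarefree)
  have hmul (r : ℕ) (hr : r ∈ Q.divisors) :
      s.selbergTerms (d * r) = s.selbergTerms d * s.selbergTerms r :=
    s.selbergTerms_isMultiplicative.map_mul_of_coprime
      (hcop.coprime_dvd_right (Nat.dvd_of_mem_divisors hr))
  rw [sum_divisors_selbergTerms dvd_rfl, hP, sum_divisors_mul_filter_dvd
    (ne_zero_of_dvd_ne_zero s.prodPrimes_ne_zero hd), sum_congr rfl hmul, ← mul_sum,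
    sum_divisors_selbergTerms hQ, s.selbergTerms_isMultiplicative.map_mul_of_coprime hcop,
    s.nu_mult.map_mul_of_coprime hcop]
  have hnu := s.nu_ne_zero hd
  field_simp

lemma abs_selbergWeight_le {y : ℕ → ℝ} {B : ℝ} (hy : ∀ k, |y k| ≤ B) {d : ℕ}
    (hd : d ∣ s.prodPrimes) :
    |selbergWeight s y d| ≤ B * ∑ r ∈ s.prodPrimes.divisors, s.selbergTerms r := by
  have hnu := s.nu_pos_of_dvd_prodPrimes hd
  have hmoebius : |(μ d : ℝ)| ≤ 1 := by exact_mod_cast ArithmeticFunction.abs_moebius_le_one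
  have hsum : |∑ k ∈ s.prodPrimes.divisors with d ∣ k, s.selbergTerms k * y k|
      ≤ B * (s.nu d * ∑ r ∈ s.prodPrimes.divisors, s.selbergTerms r) := by
    rw [← sum_filter_dvd_selbergTerms hd, mul_sum]
    refine (abs_sum_le_sum_abs _ _).trans (sum_le_sum fun k hk ↦ ?_)
    have hterm := selbergTerms_nonneg_of_mem (mem_filter.1 hk).1
    rw [abs_mul, abs_of_nonneg hterm, mul_comm]
    exact mul_le_mul_of_nonneg_right (hy k) hterm
  rw [selbergWeight, abs_mul, abs_mul, abs_of_pos (inv_pos.2 hnu)]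
  calc |(μ d : ℝ)| * (s.nu d)⁻¹
        * |∑ k ∈ s.prodPrimes.divisors with d ∣ k, s.selbergTerms k * y k|
      ≤ 1 * (s.nu d)⁻¹ * (B * (s.nu d * ∑ r ∈ s.prodPrimes.divisors, s.selbergTerms r)) := by
        gcongr
    _ = B * ∑ r ∈ s.prodPrimes.divisors, s.selbergTerms r := by field_simp

lemma selbergWeight_eq_zero {y : ℕ → ℝ} {R d : ℕ} (hy : ∀ k, R ≤ k → y k = 0) (hd : R ≤ d) :
    selbergWeight s y d = 0 := by
  rw [selbergWeight, sum_eq_zero, mul_zero]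
  intro k hk
  rw [mem_filter] at hk
  rw [hy k (hd.trans (Nat.le_of_dvd (Nat.pos_of_mem_divisors hk.1) hk.2)), mul_zero]

lemma nu_le_selbergTerms {d : ℕ} (hd : d ∣ s.prodPrimes) : s.nu d ≤ s.selbergTerms d := by
  have hnu := s.nu_pos_of_dvd_prodPrimes hd
  have hd0 := ne_zero_of_dvd_ne_zero s.prodPrimes_ne_zero hd
  have hone : s.selbergTerms 1 ≤ ∑ r ∈ d.divisors, s.selbergTerms r :=
    single_le_sum (f := s.selbergTerms) (fun r hr ↦ selbergTerms_nonneg_of_mem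
      (Nat.divisors_subset_of_dvd s.prodPrimes_ne_zero hd hr)) (Nat.one_mem_divisors.2 hd0)
  rwa [s.selbergTerms_isMultiplicative.map_one, sum_divisors_selbergTerms hd,
    ← div_eq_mul_inv, one_le_div₀ hnu] at hone

lemma sum_abs_selbergWeight_mul_le {y : ℕ → ℝ} {B : ℝ} {R : ℕ} (hy : ∀ k, |y k| ≤ B)
    (hyR : ∀ k, R ≤ k → y k = 0) :
    ∑ d ∈ s.prodPrimes.divisors, |selbergWeight s y d| * (d * s.nu d)
      ≤ B * R * (∑ r ∈ s.prodPrimes.divisors, s.selbergTerms r) ^ 2 := by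
  have hB : 0 ≤ B := (abs_nonneg _).trans (hy 0)
  have hV : 0 ≤ ∑ r ∈ s.prodPrimes.divisors, s.selbergTerms r :=
    sum_nonneg fun r hr ↦ selbergTerms_nonneg_of_mem hr
  rw [sq, ← mul_assoc, mul_sum]
  refine sum_le_sum fun d hd ↦ ?_
  have hdP := Nat.dvd_of_mem_divisors hd
  have hterm := selbergTerms_nonneg_of_mem hd
  rcases le_total R d with hRd | hdR
  · rw [selbergWeight_eq_zero hyR hRd, abs_zero, zero_mul]
    positivity
  · have hnu := (s.nu_pos_of_dvd_prodPrimes hdP).le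
    calc |selbergWeight s y d| * (d * s.nu d)
        ≤ (B * ∑ r ∈ s.prodPrimes.divisors, s.selbergTerms r) * (R * s.selbergTerms d) := by
          gcongr
          · exact abs_selbergWeight_le hy hdP
          · exact nu_le_selbergTerms hdP
      _ = _ := by ring

end Selberg

/-! ### Logarithmic moments -/

/-- The truncated logarithm `log⁺ (R / r)`, the diagonal variable of the Selberg weights. -/
noncomputable def truncLog (R r : ℕ) : ℝ := max 0 (log R - log r)

lemma truncLog_nonneg (R r : ℕ) : 0 ≤ truncLog R r := le_max_left _ _

lemma truncLog_le_log (R r : ℕ) : truncLog R r ≤ log R :=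
  max_le (log_natCast_nonneg R) (by linarith [log_natCast_nonneg r])

lemma truncLog_eq_zero {R r : ℕ} (h : R ≤ r) : truncLog R r = 0 := by
  refine max_eq_left (sub_nonpos.2 ?_)
  obtain rfl | hR := R.eq_zero_or_pos
  · simpa using log_natCast_nonneg r
  · gcongr

lemma truncLog_mul {p r : ℕ} (R : ℕ) (hp : p ≠ 0) (hr : r ≠ 0) :
    truncLog R (p * r) = max 0 (truncLog R r - log p) := by
  have hlog := log_natCast_nonneg p
  rw [truncLog, truncLog, Nat.cast_mul, log_mul (by simpa) (by simpa)]
  grind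

lemma truncLog_sub_truncLog_mul {p r : ℕ} (R : ℕ) (hp : p ≠ 0) (hr : r ≠ 0) :
    truncLog R r - truncLog R (p * r) = min (log p) (truncLog R r) := by
  rw [truncLog_mul R hp hr]
  grind

lemma log_mul_truncLog (R r : ℕ) :
    log R * truncLog R r = truncLog R r ^ 2 + truncLog R r * log r := by
  rcases max_cases 0 (log R - log r) with ⟨h, -⟩ | ⟨h, -⟩ <;> rw [truncLog, h] <;> ring

/-- The moments `∑ h(r) log⁺(R / r) ^ j` over the divisors `r` of the sieving range, where `h` is
`BoundingSieve.selbergTerms`. -/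
noncomputable def logMoment (s : BoundingSieve) (R j : ℕ) : ℝ :=
  ∑ r ∈ s.prodPrimes.divisors, s.selbergTerms r * truncLog R r ^ j

section Moments

variable (s : BoundingSieve) {R κ : ℕ}

lemma logMoment_nonneg (R j : ℕ) : 0 ≤ logMoment s R j :=
  sum_nonneg fun r hr ↦
    mul_nonneg (selbergTerms_nonneg_of_mem hr) (pow_nonneg (truncLog_nonneg R r) j)

lemma log_sq_le_logMoment_two (R : ℕ) : log R ^ 2 ≤ logMoment s R 2 := by
  have hone : s.selbergTerms 1 * truncLog R 1 ^ 2 ≤ logMoment s R 2 :=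
    single_le_sum (f := fun r ↦ s.selbergTerms r * truncLog R r ^ 2)
      (fun r hr ↦ mul_nonneg (selbergTerms_nonneg_of_mem hr) (sq_nonneg _))
      (Nat.one_mem_divisors.2 s.prodPrimes_ne_zero)
  have htrunc : truncLog R 1 = log R := by simp [truncLog, log_natCast_nonneg]
  rwa [s.selbergTerms_isMultiplicative.map_one, one_mul, htrunc] at hone

variable {s}

lemma sum_filter_dvd_selbergTerms_mul_le {d : ℕ} (hd : d ∣ s.prodPrimes) {f : ℕ → ℝ}
    (hf : ∀ r, 0 ≤ f r) :
    ∑ r ∈ s.prodPrimes.divisors with d ∣ r, s.selbergTerms r * f r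
      ≤ s.selbergTerms d * ∑ r ∈ s.prodPrimes.divisors, s.selbergTerms r * f (d * r) := by
  have hterm := s.selbergTerms_pos hd
  obtain ⟨Q, hP⟩ := hd
  have hd : d ≠ 0 := ne_zero_of_dvd_ne_zero s.prodPrimes_ne_zero (hP ▸ dvd_mul_right d Q)
  have hcop : d.Coprime Q := Nat.coprime_of_squarefree_mul (hP ▸ s.prodPrimes_squarefree)
  have hmul (r : ℕ) (hr : r ∈ Q.divisors) : s.selbergTerms (d * r) * f (d * r)
      = s.selbergTerms d * (s.selbergTerms r * f (d * r)) := by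
    rw [s.selbergTerms_isMultiplicative.map_mul_of_coprime
      (hcop.coprime_dvd_right (Nat.dvd_of_mem_divisors hr)), mul_assoc]
  calc ∑ r ∈ s.prodPrimes.divisors with d ∣ r, s.selbergTerms r * f r
      = s.selbergTerms d * ∑ r ∈ Q.divisors, s.selbergTerms r * f (d * r) := by
        rw [hP, sum_divisors_mul_filter_dvd hd, sum_congr rfl hmul, mul_sum]
    _ ≤ _ := mul_le_mul_of_nonneg_left (sum_le_sum_of_subset_of_nonneg
        (Nat.divisors_subset_of_dvd s.prodPrimes_ne_zero (hP ▸ dvd_mul_left Q d))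
        fun r hr _ ↦ mul_nonneg (selbergTerms_nonneg_of_mem hr) (hf _)) hterm.le

lemma sum_selbergTerms_mul_log_le {f : ℕ → ℝ} (hf : ∀ r, 0 ≤ f r) :
    ∑ r ∈ s.prodPrimes.divisors, s.selbergTerms r * f r * log r
      ≤ ∑ r ∈ s.prodPrimes.divisors, s.selbergTerms r *
          ∑ p ∈ s.prodPrimes.primeFactors, log p * s.selbergTerms p * f (p * r) := by
  have hlog (r : ℕ) (hr : r ∈ s.prodPrimes.divisors) :
      log r = ∑ p ∈ s.prodPrimes.primeFactors with p ∣ r, log p := by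
    have hrP := Nat.dvd_of_mem_divisors hr
    have hprimes : {p ∈ s.prodPrimes.primeFactors | p ∣ r} = r.primeFactors := by
      ext p
      simp only [mem_filter, Nat.mem_primeFactors]
      exact ⟨fun h ↦ ⟨h.1.1, h.2, (Nat.pos_of_mem_divisors hr).ne'⟩,
        fun h ↦ ⟨⟨h.1, h.2.1.trans hrP, s.prodPrimes_ne_zero⟩, h.2.1⟩⟩
    rw [hprimes, ← log_prod fun p hp ↦ by
      exact_mod_cast (Nat.prime_of_mem_primeFactors hp).ne_zero, ← Nat.cast_prod,
      Nat.prod_primeFactors_of_squarefree (s.squarefree_of_dvd_prodPrimes hrP)]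
  calc ∑ r ∈ s.prodPrimes.divisors, s.selbergTerms r * f r * log r
      = ∑ p ∈ s.prodPrimes.primeFactors,
          log p * ∑ r ∈ s.prodPrimes.divisors with p ∣ r, s.selbergTerms r * f r := by
        simp only [mul_sum, sum_filter]
        rw [sum_comm]
        refine sum_congr rfl fun r hr ↦ ?_
        rw [hlog r hr, sum_filter, mul_sum]
        exact sum_congr rfl fun p _ ↦ by split_ifs <;> ring
    _ ≤ ∑ p ∈ s.prodPrimes.primeFactors, log p *
          (s.selbergTerms p * ∑ r ∈ s.prodPrimes.divisors, s.selbergTerms r * f (p * r)) := by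
        gcongr with p hp
        exact sum_filter_dvd_selbergTerms_mul_le (Nat.dvd_of_mem_primeFactors hp) hf
    _ = _ := by
        simp only [mul_sum]
        rw [sum_comm]
        exact sum_congr rfl fun r _ ↦ sum_congr rfl fun p _ ↦ by ring

lemma selbergTerms_prime_le {p : ℕ} (hp : p ∈ s.prodPrimes.primeFactors)
    (hnu : s.nu p = κ / p) :
    s.selbergTerms p ≤ κ / p + κ ^ 2 * (κ + 1) / (p : ℝ) ^ 2 := by
  have hp' := Nat.prime_of_mem_primeFactors hp
  have hp0 : (0 : ℝ) < p := by exact_mod_cast hp'.pos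
  have hlt := s.nu_lt_one_of_prime p hp' (Nat.dvd_of_mem_primeFactors hp)
  rw [hnu, div_lt_one hp0, Nat.cast_lt, ← Nat.add_one_le_iff] at hlt
  have hκp : (κ : ℝ) + 1 ≤ p := by exact_mod_cast hlt
  have hsub : (0 : ℝ) < p - κ := by linarith
  rw [selbergTerms_prime hp', hnu, one_sub_div hp0.ne', inv_div, div_mul_div_cancel₀ hp0.ne',
    div_add_div _ _ hp0.ne' (by positivity), div_le_div_iff₀ hsub (by positivity), ← sub_nonneg]
  have hid : (κ * (p : ℝ) ^ 2 + p * (κ ^ 2 * (κ + 1))) * (p - κ) - κ * (p * (p : ℝ) ^ 2)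
      = κ ^ 3 * p * (p - (κ + 1)) := by ring
  rw [hid]
  have := sub_nonneg.2 hκp
  positivity

end Moments

lemma sum_mul_max_sub_log_le_sum_primesLE {S : Finset ℕ} (hS : ∀ p ∈ S, p.Prime) {f : ℕ → ℝ}
    (hf : ∀ p, 0 ≤ f p) {R : ℕ} {L : ℝ} (hL : L ≤ log R) :
    ∑ p ∈ S, f p * max 0 (L - log p) ≤ ∑ p ∈ R.primesLE, f p * max 0 (L - log p) := by
  have hmem (p : ℕ) (hp : p ∈ S) (hne : f p * max 0 (L - log p) ≠ 0) : p ∈ R.primesLE := by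
    rw [Nat.mem_primesLE]
    refine ⟨le_of_not_gt fun hR ↦ hne ?_, hS p hp⟩
    have hlog : log R ≤ log p := by
      obtain rfl | hR0 := R.eq_zero_or_pos
      · simpa using log_natCast_nonneg p
      · gcongr
    rw [max_eq_left (by linarith), mul_zero]
  rw [← sum_filter_of_ne hmem]
  exact sum_le_sum_of_subset_of_nonneg (fun p hp ↦ (mem_filter.1 hp).2)
    fun p _ _ ↦ mul_nonneg (hf p) (le_max_left _ _)

lemma exists_sum_log_mul_selbergTerms_mul_le (κ : ℕ) :
    ∃ C, 0 ≤ C ∧ ∀ (s : BoundingSieve) (R : ℕ) (L : ℝ), 0 < R →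
      (∀ p ∈ s.prodPrimes.primeFactors, s.nu p = κ / p) → 0 ≤ L → L ≤ log R →
      ∑ p ∈ s.prodPrimes.primeFactors, log p * s.selbergTerms p * max 0 (L - log p)
        ≤ κ / 2 * L ^ 2 + C * L := by
  obtain ⟨C, hC, hsum⟩ := exists_sum_primesLE_mul_sub_le
  set D := ∑' n : ℕ, log n / (n : ℝ) ^ 2
  have : 0 ≤ D := tsum_nonneg fun n ↦ div_nonneg (log_natCast_nonneg n) (by positivity)
  refine ⟨κ * C + κ ^ 2 * (κ + 1) * D, by positivity, fun s R L hR hnu hL hLR ↦ ?_⟩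
  have hsq : ∑ p ∈ R.primesLE, log p / (p : ℝ) ^ 2 * max 0 (L - log p) ≤ D * L := by
    refine (sum_le_sum fun p _ ↦ mul_le_mul_of_nonneg_left (max_le hL ?_) ?_).trans ?_
    · linarith [log_natCast_nonneg p]
    · exact div_nonneg (log_natCast_nonneg p) (by positivity)
    · rw [← sum_mul]
      exact mul_le_mul_of_nonneg_right (summable_log_div_sq.sum_le_tsum _ fun n _ ↦
        div_nonneg (log_natCast_nonneg n) (by positivity)) hL
  calc ∑ p ∈ s.prodPrimes.primeFactors, log p * s.selbergTerms p * max 0 (L - log p)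
      ≤ ∑ p ∈ s.prodPrimes.primeFactors,
          (κ * (log p / p) + κ ^ 2 * (κ + 1) * (log p / (p : ℝ) ^ 2)) * max 0 (L - log p) := by
        refine sum_le_sum fun p hp ↦ mul_le_mul_of_nonneg_right ?_ (le_max_left _ _)
        have := mul_le_mul_of_nonneg_left (selbergTerms_prime_le hp (hnu p hp))
          (log_natCast_nonneg p)
        exact this.trans_eq (by ring)
    _ ≤ ∑ p ∈ R.primesLE,
          (κ * (log p / p) + κ ^ 2 * (κ + 1) * (log p / (p : ℝ) ^ 2)) * max 0 (L - log p) :=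
        sum_mul_max_sub_log_le_sum_primesLE (fun p ↦ Nat.prime_of_mem_primeFactors)
          (fun p ↦ by have := log_natCast_nonneg p; positivity) hLR
    _ = κ * ∑ p ∈ R.primesLE, log p / p * max 0 (L - log p)
          + κ ^ 2 * (κ + 1) * ∑ p ∈ R.primesLE, log p / (p : ℝ) ^ 2 * max 0 (L - log p) := by
        simp only [add_mul, mul_assoc, sum_add_distrib, mul_sum]
    _ ≤ κ * (L ^ 2 / 2 + C * L) + κ ^ 2 * (κ + 1) * (D * L) := by
        gcongr
        exact hsum R L hR hL hLR
    _ = _ := by ring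

lemma exists_log_mul_logMoment_one_le (κ : ℕ) :
    ∃ C, 0 ≤ C ∧ ∀ (s : BoundingSieve) (R : ℕ), 0 < R →
      (∀ p ∈ s.prodPrimes.primeFactors, s.nu p = κ / p) →
      log R * logMoment s R 1 ≤ (κ + 2) / 2 * logMoment s R 2 + C * logMoment s R 1 := by
  obtain ⟨C, hC, hsum⟩ := exists_sum_log_mul_selbergTerms_mul_le κ
  refine ⟨C, hC, fun s R hR hnu ↦ ?_⟩
  have hprimes (r : ℕ) (hr : r ∈ s.prodPrimes.divisors) :
      ∑ p ∈ s.prodPrimes.primeFactors, log p * s.selbergTerms p * truncLog R (p * r)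
        ≤ κ / 2 * truncLog R r ^ 2 + C * truncLog R r := by
    refine (sum_congr rfl fun p hp ↦ ?_).trans_le
      (hsum s R _ hR hnu (truncLog_nonneg R r) (truncLog_le_log R r))
    rw [truncLog_mul R (Nat.prime_of_mem_primeFactors hp).ne_zero
      (Nat.pos_of_mem_divisors hr).ne']
  calc log R * logMoment s R 1
      = logMoment s R 2
          + ∑ r ∈ s.prodPrimes.divisors, s.selbergTerms r * truncLog R r * log r := by
        simp only [logMoment, mul_sum, ← sum_add_distrib]
        refine sum_congr rfl fun r _ ↦ ?_
        rw [pow_one, mul_left_comm, log_mul_truncLog]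
        ring
    _ ≤ logMoment s R 2 + ∑ r ∈ s.prodPrimes.divisors, s.selbergTerms r *
          (κ / 2 * truncLog R r ^ 2 + C * truncLog R r) := by
        refine add_le_add le_rfl ((sum_selbergTerms_mul_log_le (truncLog_nonneg R)).trans ?_)
        exact sum_le_sum fun r hr ↦
          mul_le_mul_of_nonneg_left (hprimes r hr) (selbergTerms_nonneg_of_mem hr)
    _ = _ := by
        simp only [logMoment, mul_sum, ← sum_add_distrib]
        exact sum_congr rfl fun r _ ↦ by ring

lemma exists_sum_selbergTerms_le (κ : ℕ) :
    ∃ C, 0 ≤ C ∧ ∀ (s : BoundingSieve) (z : ℕ), 2 ≤ z →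
      (∀ p ∈ s.prodPrimes.primeFactors, s.nu p = κ / p) → (∀ p ∈ s.prodPrimes.primeFactors, p ≤ z) →
      ∑ r ∈ s.prodPrimes.divisors, s.selbergTerms r ≤ C * log z ^ κ := by
  obtain ⟨C, hC⟩ := exists_sum_inv_primesLE_le
  have hsummable : Summable fun n : ℕ ↦ ((n : ℝ) ^ 2)⁻¹ := summable_nat_pow_inv.2 one_lt_two
  set D := ∑' n : ℕ, ((n : ℝ) ^ 2)⁻¹
  refine ⟨exp (κ * C + κ ^ 2 * (κ + 1) * D), (exp_pos _).le, fun s z hz hnu hPz ↦ ?_⟩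
  have hsubset : s.prodPrimes.primeFactors ⊆ z.primesLE := fun p hp ↦
    Nat.mem_primesLE.2 ⟨hPz p hp, Nat.prime_of_mem_primeFactors hp⟩
  have hinv : ∑ p ∈ s.prodPrimes.primeFactors, (p : ℝ)⁻¹ ≤ log (log z) + C :=
    (sum_le_sum_of_subset_of_nonneg hsubset fun p _ _ ↦ by positivity).trans (hC z hz)
  have hlog : 0 < log z := log_pos (by exact_mod_cast hz)
  calc ∑ r ∈ s.prodPrimes.divisors, s.selbergTerms r
      = ∏ p ∈ s.prodPrimes.primeFactors, (1 + s.selbergTerms p) :=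
        (s.selbergTerms_isMultiplicative.prodPrimeFactors_one_add_of_squarefree
          s.prodPrimes_squarefree).symm
    _ ≤ ∏ p ∈ s.prodPrimes.primeFactors, exp (s.selbergTerms p) := by
        simp only [add_comm (1 : ℝ)]
        refine prod_le_prod (fun p hp ↦ ?_) fun p _ ↦ add_one_le_exp _
        have := s.selbergTerms_pos (Nat.dvd_of_mem_primeFactors hp)
        positivity
    _ = exp (∑ p ∈ s.prodPrimes.primeFactors, s.selbergTerms p) := (exp_sum _ _).symm
    _ ≤ exp (κ * ∑ p ∈ s.prodPrimes.primeFactors, (p : ℝ)⁻¹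
          + κ ^ 2 * (κ + 1) * ∑ p ∈ s.prodPrimes.primeFactors, ((p : ℝ) ^ 2)⁻¹) := by
        rw [mul_sum, mul_sum, ← sum_add_distrib]
        gcongr with p hp
        exact selbergTerms_prime_le hp (hnu p hp)
    _ ≤ exp (κ * (log (log z) + C) + κ ^ 2 * (κ + 1) * D) := by
        gcongr
        exact hsummable.sum_le_tsum _ fun n _ ↦ by positivity
    _ = exp (κ * C + κ ^ 2 * (κ + 1) * D) * log z ^ κ := by
        rw [mul_add, add_assoc, exp_add, exp_nat_mul, exp_log hlog, mul_comm]

/-- The sum `∑ h(r) (y(r) - y(pr)) ^ 2` attached to a prime `p` when the diagonal variable `y` is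
`truncLog R`: up to the density of `p ^ a`, it is the mass of the sieve weights on the multiples of
`p ^ a`. -/
noncomputable def minMoment (s : BoundingSieve) (R p : ℕ) : ℝ :=
  ∑ r ∈ s.prodPrimes.divisors, s.selbergTerms r * min (log p) (truncLog R r) ^ 2

lemma sum_selbergTerms_mul_sub_sq (s : BoundingSieve) (R : ℕ) {p : ℕ} (hp : p ≠ 0) :
    ∑ r ∈ s.prodPrimes.divisors, s.selbergTerms r * (truncLog R r - truncLog R (p * r)) ^ 2
      = minMoment s R p :=
  sum_congr rfl fun r hr ↦ by
    rw [truncLog_sub_truncLog_mul R hp (Nat.pos_of_mem_divisors hr).ne']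

lemma minMoment_le (s : BoundingSieve) (R p : ℕ) :
    minMoment s R p ≤ log p * logMoment s R 1 := by
  rw [minMoment, logMoment, mul_sum]
  refine sum_le_sum fun r hr ↦ ?_
  have hlog := log_natCast_nonneg p
  have htrunc := truncLog_nonneg R r
  rw [mul_left_comm, pow_one, sq]
  have hsq : min (log p) (truncLog R r) * min (log p) (truncLog R r) ≤ log p * truncLog R r :=
    mul_le_mul (min_le_left _ _) (min_le_right _ _) (le_min hlog htrunc) hlog
  exact mul_le_mul_of_nonneg_left hsq (selbergTerms_nonneg_of_mem hr)

lemma sum_inv_pow_le {x : ℝ} (hx : 2 ≤ x) (A : ℕ) : ∑ a ∈ Ico 2 A, (x ^ a)⁻¹ ≤ 2 / x ^ 2 := by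
  have : 0 < x := by linarith
  have hinv : x⁻¹ ≤ 1 / 2 := (inv_le_of_inv_le₀ (by norm_num) (by linarith))
  calc ∑ a ∈ Ico 2 A, (x ^ a)⁻¹ = ∑ a ∈ Ico 2 A, x⁻¹ ^ a := by simp only [inv_pow]
    _ ≤ x⁻¹ ^ 2 / (1 - x⁻¹) := geom_sum_Ico_le_of_lt_one (by positivity) (by linarith)
    _ ≤ x⁻¹ ^ 2 / (1 / 2) := by gcongr; linarith
    _ = 2 / x ^ 2 := by field_simp

lemma exists_sum_inv_pow_mul_minMoment_le :
    ∃ C, 0 ≤ C ∧ ∀ (s : BoundingSieve) (R A : ℕ),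
      ∑ p ∈ s.prodPrimes.primeFactors, ∑ a ∈ Ico 2 A, ((p : ℝ) ^ a)⁻¹ * minMoment s R p
        ≤ C * logMoment s R 1 := by
  refine ⟨2 * ∑' n : ℕ, log n / (n : ℝ) ^ 2, mul_nonneg zero_le_two (tsum_nonneg fun n ↦
    div_nonneg (log_natCast_nonneg n) (by positivity)), fun s R A ↦ ?_⟩
  have hT := logMoment_nonneg s R 1
  calc ∑ p ∈ s.prodPrimes.primeFactors, ∑ a ∈ Ico 2 A, ((p : ℝ) ^ a)⁻¹ * minMoment s R p
      ≤ ∑ p ∈ s.prodPrimes.primeFactors, 2 / (p : ℝ) ^ 2 * (log p * logMoment s R 1) := by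
        refine sum_le_sum fun p hp ↦ ?_
        have hp2 : (2 : ℝ) ≤ p := by exact_mod_cast (Nat.prime_of_mem_primeFactors hp).two_le
        rw [← sum_mul]
        refine mul_le_mul (sum_inv_pow_le hp2 A) (minMoment_le s R p) ?_ (by positivity)
        exact sum_nonneg fun r hr ↦ mul_nonneg (selbergTerms_nonneg_of_mem hr) (sq_nonneg _)
    _ = 2 * (∑ p ∈ s.prodPrimes.primeFactors, log p / (p : ℝ) ^ 2) * logMoment s R 1 := by
        rw [mul_sum, sum_mul]
        exact sum_congr rfl fun p _ ↦ by ring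
    _ ≤ _ := by
        gcongr
        exact summable_log_div_sq.sum_le_tsum _ fun n _ ↦
          div_nonneg (log_natCast_nonneg n) (by positivity)

/-- An upper bound for the limiting weighted count of the small prime factors of a sequence of
sieve dimension `κ`, a prime `p ≤ R ^ 2` being counted with weight `1 - log p / (2 log R)`. -/
noncomputable def smallPrimeExcess (κ : ℕ) : ℝ :=
  κ * (log (κ + 2) - 1 / 2 + 2 / (3 * (κ + 2)))

lemma one_sub_log_div_nonneg {R p : ℕ} (hpR : p ≤ R ^ 2) : 0 ≤ 1 - log p / (2 * log R) := by
  have hlog : log p ≤ 2 * log R := by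
    obtain rfl | hp := p.eq_zero_or_pos
    · simpa using log_natCast_nonneg R
    · calc log p ≤ log (R ^ 2 : ℕ) := by gcongr
        _ = 2 * log R := by simp
  exact sub_nonneg.2 (div_le_one_of_le₀ hlog (by have := log_natCast_nonneg R; positivity))

lemma exists_sum_nu_mul_min_sq_le (κ : ℕ) :
    ∃ b C : ℝ, 0 ≤ b ∧ 0 ≤ C ∧ ∀ (s : BoundingSieve) (R : ℕ) (L : ℝ), 0 ≤ L → L ≤ log R →
      (∀ p ∈ s.prodPrimes.primeFactors, s.nu p = κ / p) →
      (∀ p ∈ s.prodPrimes.primeFactors, p ≤ R ^ 2) →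
      ∑ p ∈ s.prodPrimes.primeFactors,
          (1 - log p / (2 * log R)) * (s.nu p * min (log p) L ^ 2)
        ≤ smallPrimeExcess κ * L ^ 2 + b * (log R * L - (κ + 2) / 2 * L ^ 2) + C * L := by
  have hz1 : (2 : ℝ) / (κ + 2) ≤ 1 := div_le_one_of_le₀ (by simp) (by positivity)
  obtain ⟨C, hC, hsum⟩ := exists_sum_primesLE_min_sq_le (by positivity : (0 : ℝ) < 2 / (κ + 2)) hz1
  set z : ℝ := 2 / (κ + 2) with hz
  have hz0 : 0 < z := by positivity
  have hb : 0 ≤ z - z ^ 2 / 3 := by nlinarith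
  refine ⟨κ * (z - z ^ 2 / 3), κ * C, by positivity, by positivity, fun s R L hL hLR hnu hPR ↦ ?_⟩
  have hdiv : 2 / z = κ + 2 := by rw [hz, div_div_cancel₀ two_ne_zero]
  calc ∑ p ∈ s.prodPrimes.primeFactors, (1 - log p / (2 * log R)) * (s.nu p * min (log p) L ^ 2)
      = ∑ p ∈ s.prodPrimes.primeFactors,
          (κ : ℝ) * ((p : ℝ)⁻¹ * (1 - log p / (2 * log R)) * min (log p) L ^ 2) :=
        sum_congr rfl fun p hp ↦ by rw [hnu p hp]; ring
    _ ≤ (κ : ℝ) * ∑ p ∈ (R ^ 2).primesLE,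
          (p : ℝ)⁻¹ * (1 - log p / (2 * log R)) * min (log p) L ^ 2 := by
        rw [mul_sum]
        refine sum_le_sum_of_subset_of_nonneg (fun p hp ↦
          Nat.mem_primesLE.2 ⟨hPR p hp, Nat.prime_of_mem_primeFactors hp⟩) fun p hp _ ↦ ?_
        have := one_sub_log_div_nonneg (Nat.mem_primesLE.1 hp).1
        positivity
    _ ≤ κ * ((log (2 / z) - 1 / 2 + z / 3) * L ^ 2
          + (z - z ^ 2 / 3) * (log R * L - L ^ 2 / z) + C * L) := by
        gcongr
        exact hsum R L hL hLR
    _ = _ := by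
        rw [smallPrimeExcess, hdiv, hz]
        field_simp

lemma exists_sum_nu_mul_minMoment_le (κ : ℕ) :
    ∃ C, 0 ≤ C ∧ ∀ (s : BoundingSieve) (R : ℕ), 0 < R →
      (∀ p ∈ s.prodPrimes.primeFactors, s.nu p = κ / p) →
      (∀ p ∈ s.prodPrimes.primeFactors, p ≤ R ^ 2) →
      ∑ p ∈ s.prodPrimes.primeFactors, (1 - log p / (2 * log R)) * (s.nu p * minMoment s R p)
        ≤ smallPrimeExcess κ * logMoment s R 2 + C * logMoment s R 1 := by
  obtain ⟨b, C, hb, hC, hsum⟩ := exists_sum_nu_mul_min_sq_le κ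
  obtain ⟨C', hC', hmoment⟩ := exists_log_mul_logMoment_one_le κ
  refine ⟨b * C' + C, by positivity, fun s R hR hnu hPR ↦ ?_⟩
  calc ∑ p ∈ s.prodPrimes.primeFactors, (1 - log p / (2 * log R)) * (s.nu p * minMoment s R p)
      = ∑ r ∈ s.prodPrimes.divisors, s.selbergTerms r * ∑ p ∈ s.prodPrimes.primeFactors,
          (1 - log p / (2 * log R)) * (s.nu p * min (log p) (truncLog R r) ^ 2) := by
        simp only [minMoment, mul_sum]
        rw [sum_comm]
        exact sum_congr rfl fun r _ ↦ sum_congr rfl fun p _ ↦ by ring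
    _ ≤ ∑ r ∈ s.prodPrimes.divisors, s.selbergTerms r *
          (smallPrimeExcess κ * truncLog R r ^ 2
            + b * (log R * truncLog R r - (κ + 2) / 2 * truncLog R r ^ 2)
            + C * truncLog R r) :=
        sum_le_sum fun r hr ↦ mul_le_mul_of_nonneg_left
          (hsum s R _ (truncLog_nonneg R r) (truncLog_le_log R r) hnu hPR)
          (selbergTerms_nonneg_of_mem hr)
    _ = smallPrimeExcess κ * logMoment s R 2
          + b * (log R * logMoment s R 1 - (κ + 2) / 2 * logMoment s R 2)
          + C * logMoment s R 1 := by
        simp only [logMoment, mul_sum, ← sum_add_distrib, ← sum_sub_distrib]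
        exact sum_congr rfl fun r _ ↦ by ring
    _ ≤ smallPrimeExcess κ * logMoment s R 2 + b * (C' * logMoment s R 1)
          + C * logMoment s R 1 := by
        gcongr
        linarith [hmoment s R hR hnu]
    _ = _ := by ring

/-! ### The weighted sieve -/

section CardFactors

open ArithmeticFunction (cardFactors)

lemma factorization_eq_one_add_sum {n p A : ℕ} (hn : n ≠ 0) (hp : p.Prime) (hpn : p ∣ n)
    (hA : n < 2 ^ A) :
    (n.factorization p : ℝ) = 1 + ∑ a ∈ Ico 2 A, if p ^ a ∣ n then 1 else 0 := by
  have hlt {a : ℕ} (ha : p ^ a ∣ n) : a < A :=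
    (Nat.pow_lt_pow_iff_right one_lt_two).1 <|
      ((Nat.pow_le_pow_left hp.two_le a).trans (Nat.le_of_dvd (Nat.pos_of_ne_zero hn) ha)).trans_lt
        hA
  have hpowers : {a ∈ Ico 2 A | p ^ a ∣ n} = Ico 2 (n.factorization p + 1) := by
    ext a
    simp only [mem_filter, mem_Ico, Nat.lt_add_one_iff, ← hp.pow_dvd_iff_le_factorization hn]
    exact ⟨fun h ↦ ⟨h.1.1, h.2⟩, fun h ↦ ⟨⟨h.1, hlt h.2⟩, h.2⟩⟩
  have hpos := hp.factorization_pos_of_dvd hn hpn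
  rw [sum_boole, hpowers, Nat.card_Ico, ← Nat.cast_one, ← Nat.cast_add, Nat.cast_inj]
  lia

lemma cardFactors_sub_log_div_eq_sum (n : ℕ) (Y : ℝ) :
    (cardFactors n : ℝ) - log n / Y
      = ∑ p ∈ n.primeFactors, (n.factorization p : ℝ) * (1 - log p / Y) := by
  rw [ArithmeticFunction.cardFactors_eq_sum_factorization, log_nat_eq_sum_factorization,
    Finsupp.sum, Finsupp.sum, Nat.support_factorization, Nat.cast_sum, sum_div, ← sum_sub_distrib]
  exact sum_congr rfl fun p _ ↦ by ring

lemma cardFactors_le {n A : ℕ} {S : Finset ℕ} {Y : ℝ} (hn : n ≠ 0) (hS : ∀ p ∈ S, p.Prime)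
    (hY : 0 < Y) (hlarge : ∀ p ∈ n.primeFactors, p ∉ S → Y ≤ log p) (hA : n < 2 ^ A) :
    (cardFactors n : ℝ) ≤ log n / Y + ∑ p ∈ S, (1 - log p / Y) * (if p ∣ n then 1 else 0)
      + ∑ p ∈ S, ∑ a ∈ Ico 2 A, if p ^ a ∣ n then 1 else 0 := by
  set g : ℕ → ℝ := fun p ↦
    (1 - log p / Y) * (if p ∣ n then 1 else 0) + ∑ a ∈ Ico 2 A, if p ^ a ∣ n then 1 else 0 with hg
  have hprime (p : ℕ) (hp : p ∈ n.primeFactors) :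
      (n.factorization p : ℝ) * (1 - log p / Y) ≤ if p ∈ S then g p else 0 := by
    have hpn := Nat.dvd_of_mem_primeFactors hp
    split_ifs with hpS
    · have hlog : 0 ≤ log p / Y := div_nonneg (log_natCast_nonneg p) hY.le
      simp only [hg]
      rw [factorization_eq_one_add_sum hn (hS p hpS) hpn hA, if_pos hpn, mul_one, add_mul, one_mul]
      exact add_le_add le_rfl (mul_le_of_le_one_right
        (sum_nonneg fun a _ ↦ by split_ifs <;> norm_num) (by linarith))
    · have : 1 ≤ log p / Y := (one_le_div hY).2 (hlarge p hp hpS)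
      exact mul_nonpos_of_nonneg_of_nonpos (Nat.cast_nonneg _) (by linarith)
  have hsum : (cardFactors n : ℝ) - log n / Y ≤ ∑ p ∈ S, g p := by
    rw [cardFactors_sub_log_div_eq_sum]
    refine (sum_le_sum hprime).trans ?_
    rw [sum_ite_mem]
    refine sum_le_sum_of_subset_of_nonneg inter_subset_right fun p hpS hp ↦ ?_
    have hpn : ¬p ∣ n := fun h ↦
      hp (mem_inter.2 ⟨Nat.mem_primeFactors.2 ⟨hS p hpS, h, hn⟩, hpS⟩)
    simp only [hg]
    rw [if_neg hpn, mul_zero, zero_add]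
    exact sum_nonneg fun a _ ↦ by split_ifs <;> norm_num
  rw [hg, sum_add_distrib] at hsum
  linarith

end CardFactors

lemma lt_two_pow_floor_add_one {n : ℕ} {G : ℝ} (h : log n ≤ G) :
    n < 2 ^ (⌊G / log 2⌋₊ + 1) := by
  obtain rfl | hn := n.eq_zero_or_pos
  · positivity
  have hlt : log n < ((⌊G / log 2⌋₊ + 1 : ℕ) : ℝ) * log 2 := by
    rw [Nat.cast_succ, ← div_lt_iff₀ (log_pos one_lt_two)]
    exact (div_le_div_of_nonneg_right h (log_pos one_lt_two).le).trans_lt (Nat.lt_floor_add_one _)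
  rw [← log_pow] at hlt
  exact_mod_cast (log_lt_log_iff (by exact_mod_cast hn) (by positivity)).1 hlt

lemma mul_squareSum_one_le {s : BoundingSieve} {w : ℕ → ℝ} {A : ℕ} {K G Y : ℝ} (hY : 0 < Y)
    (hne : ∀ n ∈ s.support, n ≠ 0)
    (hK : ∀ n ∈ s.support, K ≤ ArithmeticFunction.cardFactors n)
    (hG : ∀ n ∈ s.support, log n ≤ G) (hA : ∀ n ∈ s.support, n < 2 ^ A)
    (hlarge : ∀ n ∈ s.support, ∀ p ∈ n.primeFactors, ¬p ∣ s.prodPrimes → Y ≤ log p) :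
    (K - G / Y) * squareSum s w 1
      ≤ ∑ p ∈ s.prodPrimes.primeFactors, (1 - log p / Y) * squareSum s w p
        + ∑ p ∈ s.prodPrimes.primeFactors, ∑ a ∈ Ico 2 A, squareSum s w (p ^ a) := by
  set c : ℕ → ℝ := fun n ↦
    s.weights n * (∑ d ∈ s.prodPrimes.divisors with d ∣ n, w d) ^ 2 with hc
  have hsquare (q : ℕ) : squareSum s w q = ∑ n ∈ s.support, c n * if q ∣ n then 1 else 0 := by
    simp only [squareSum, sum_filter, mul_ite, mul_one, mul_zero, hc]
  have hpointwise (n : ℕ) (hn : n ∈ s.support) : K - G / Y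
      ≤ ∑ p ∈ s.prodPrimes.primeFactors, (1 - log p / Y) * (if p ∣ n then 1 else 0)
        + ∑ p ∈ s.prodPrimes.primeFactors, ∑ a ∈ Ico 2 A, if p ^ a ∣ n then 1 else 0 := by
    have hOmega := cardFactors_le (S := s.prodPrimes.primeFactors) (hne n hn)
      (fun p ↦ Nat.prime_of_mem_primeFactors) hY
      (fun p hp hpS ↦ hlarge n hn p hp fun hpP ↦ hpS <| Nat.mem_primeFactors.2
        ⟨Nat.prime_of_mem_primeFactors hp, hpP, s.prodPrimes_ne_zero⟩) (hA n hn)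
    have hlog : log n / Y ≤ G / Y := div_le_div_of_nonneg_right (hG n hn) hY.le
    linarith [hK n hn]
  calc (K - G / Y) * squareSum s w 1 = ∑ n ∈ s.support, c n * (K - G / Y) := by
        rw [hsquare, mul_sum]
        exact sum_congr rfl fun n _ ↦ by rw [if_pos (one_dvd n), mul_one, mul_comm]
    _ ≤ ∑ n ∈ s.support, c n *
          (∑ p ∈ s.prodPrimes.primeFactors, (1 - log p / Y) * (if p ∣ n then 1 else 0)
            + ∑ p ∈ s.prodPrimes.primeFactors, ∑ a ∈ Ico 2 A, if p ^ a ∣ n then 1 else 0) :=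
        sum_le_sum fun n hn ↦ mul_le_mul_of_nonneg_left (hpointwise n hn)
          (mul_nonneg (s.weights_nonneg n) (sq_nonneg _))
    _ = _ := by
        simp only [hsquare, mul_add, mul_sum, sum_add_distrib]
        congr 1
        · rw [sum_comm]
          exact sum_congr rfl fun p _ ↦ sum_congr rfl fun n _ ↦ by ring
        · rw [sum_comm]
          exact sum_congr rfl fun p _ ↦ sum_comm

/-! ### Sieving the values of a function -/

/-- The primes that sieve the values of a function with `HasSieveDimension F m κ`. -/
def sievePrimes (m z : ℕ) : Finset ℕ := {p ∈ z.primesLE | ¬p ∣ m}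

lemma mem_sievePrimes {m z p : ℕ} : p ∈ sievePrimes m z ↔ p ≤ z ∧ p.Prime ∧ ¬p ∣ m := by
  simp [sievePrimes, Nat.mem_primesLE, and_assoc]

lemma prime_dvd_prod_sievePrimes {m z p : ℕ} (hp : p.Prime) :
    p ∣ ∏ q ∈ sievePrimes m z, q ↔ p ≤ z ∧ ¬p ∣ m := by
  rw [hp.prime.dvd_finsetProd_iff]
  constructor
  · rintro ⟨q, hq, hpq⟩
    obtain ⟨hqz, hq, hqm⟩ := mem_sievePrimes.1 hq
    rw [(Nat.prime_dvd_prime_iff_eq hp hq).1 hpq]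
    exact ⟨hqz, hqm⟩
  · exact fun h ↦ ⟨p, mem_sievePrimes.2 ⟨h.1, hp, h.2⟩, dvd_rfl⟩

open ArithmeticFunction.omega

lemma pow_omega_lcm_le {κ a b : ℕ} (hκ : κ ≠ 0) (ha : a ≠ 0) (hb : b ≠ 0) :
    (κ : ℝ) ^ ω (a.lcm b) ≤ κ ^ ω a * κ ^ ω b := by
  have hcard (n : ℕ) : ω n = #n.primeFactors := (List.card_toFinset _).symm
  have homega : ω (a.lcm b) ≤ ω a + ω b := by
    rw [hcard, hcard, hcard]
    refine (card_le_card ?_).trans (card_union_le _ _)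
    rw [← Nat.primeFactors_mul ha hb]
    exact Nat.primeFactors_mono (Nat.lcm_dvd_mul a b) (mul_ne_zero ha hb)
  rw [← pow_add]
  exact pow_le_pow_right₀ (by exact_mod_cast Nat.one_le_iff_ne_zero.2 hκ) homega

namespace HasSieveDimension

variable {F : ℕ → ℕ} {m κ : ℕ}

/-- The sieve of the multiset of values of `F` on `[N, 2N)` by the primes `p ≤ z` not dividing
`m`. -/
noncomputable def sieve (hF : HasSieveDimension F m κ) (N z : ℕ) : BoundingSieve where
  support := (Ico N (2 * N)).image F
  prodPrimes := ∏ p ∈ sievePrimes m z, p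
  prodPrimes_squarefree := by
    refine squarefree_prod_of_pairwise_isCoprime (fun p hp q hq hpq ↦ ?_) fun p hp ↦
      (mem_sievePrimes.1 hp).2.1.prime.squarefree
    exact Nat.coprime_iff_isRelPrime.1 ((Nat.coprime_primes (mem_sievePrimes.1 hp).2.1
      (mem_sievePrimes.1 hq).2.1).2 hpq)
  weights v := #{n ∈ Ico N (2 * N) | F n = v}
  weights_nonneg v := Nat.cast_nonneg _
  totalMass := N
  nu := ⟨fun q ↦ κ ^ ω q / q, by simp⟩
  nu_mult := by
    refine ⟨by simp, fun {a b} hab ↦ ?_⟩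
    simp only [ArithmeticFunction.coe_mk, ArithmeticFunction.cardDistinctFactors_mul hab, pow_add,
      Nat.cast_mul, mul_div_mul_comm]
  nu_pos_of_prime p hp _ := by
    have := Nat.pos_of_ne_zero hF.dim_ne_zero
    have := hp.pos
    simp only [ArithmeticFunction.coe_mk]
    positivity
  nu_lt_one_of_prime p hp hpP := by
    have hpκ : κ < p := lt_of_not_ge fun h ↦
      ((prime_dvd_prod_sievePrimes hp).1 hpP).2 (hF.dvd_of_le hp h)
    simp only [ArithmeticFunction.coe_mk, ArithmeticFunction.cardDistinctFactors_apply_prime hp,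
      pow_one]
    exact (div_lt_one (by exact_mod_cast hp.pos)).2 (by exact_mod_cast hpκ)

variable (hF : HasSieveDimension F m κ) {N z : ℕ}

lemma prime_dvd_prodPrimes_sieve {p : ℕ} (hp : p.Prime) :
    p ∣ (hF.sieve N z).prodPrimes ↔ p ≤ z ∧ ¬p ∣ m := prime_dvd_prod_sievePrimes hp

lemma le_of_mem_primeFactors_prodPrimes_sieve {p : ℕ}
    (hp : p ∈ (hF.sieve N z).prodPrimes.primeFactors) : p ≤ z :=
  ((hF.prime_dvd_prodPrimes_sieve (Nat.prime_of_mem_primeFactors hp)).1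
    (Nat.dvd_of_mem_primeFactors hp)).1

lemma card_primeFactors_prodPrimes_sieve_le (N z : ℕ) :
    #(hF.sieve N z).prodPrimes.primeFactors ≤ z := by
  refine (card_le_card fun p hp ↦ ?_).trans_eq (Nat.card_Icc 1 z)
  exact mem_Icc.2 ⟨(Nat.prime_of_mem_primeFactors hp).one_le,
    hF.le_of_mem_primeFactors_prodPrimes_sieve hp⟩

lemma nu_sieve (q : ℕ) : (hF.sieve N z).nu q = κ ^ ω q / q := rfl

lemma nu_sieve_prime_pow {p a : ℕ} (hp : p.Prime) (ha : a ≠ 0) :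
    (hF.sieve N z).nu (p ^ a) = κ / (p : ℝ) ^ a := by
  rw [nu_sieve, ArithmeticFunction.cardDistinctFactors_apply_prime_pow hp ha, pow_one,
    Nat.cast_pow]

lemma nu_sieve_of_mem_primeFactors {p : ℕ} (hp : p ∈ (hF.sieve N z).prodPrimes.primeFactors) :
    (hF.sieve N z).nu p = κ / p := by
  simpa using hF.nu_sieve_prime_pow (N := N) (z := z) (Nat.prime_of_mem_primeFactors hp) one_ne_zero

lemma mul_nu_sieve {q : ℕ} (hq : q ≠ 0) : q * (hF.sieve N z).nu q = κ ^ ω q := by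
  rw [nu_sieve, mul_div_cancel₀ _ (Nat.cast_ne_zero.2 hq)]

lemma coprime_of_dvd_prodPrimes_sieve {d : ℕ} (hd : d ∣ (hF.sieve N z).prodPrimes) :
    d.Coprime m :=
  Nat.Coprime.coprime_dvd_left hd <| Nat.Coprime.prod_left fun _ hp ↦
    (mem_sievePrimes.1 hp).2.1.coprime_iff_not_dvd.2 (mem_sievePrimes.1 hp).2.2

lemma multSum_sieve (q : ℕ) :
    (hF.sieve N z).multSum q = #{n ∈ Ico N (2 * N) | q ∣ F n} := by
  have hfiber (v : ℕ) : (if q ∣ v then (#{n ∈ Ico N (2 * N) | F n = v} : ℝ) else 0)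
      = ∑ n ∈ Ico N (2 * N) with F n = v, if q ∣ F n then 1 else 0 := by
    rw [sum_congr rfl fun n hn ↦ by rw [(mem_filter.1 hn).2], sum_const, nsmul_eq_mul]
    simp
  simp only [BoundingSieve.multSum, sieve, hfiber]
  rw [sum_fiberwise_of_maps_to fun n hn ↦ mem_image_of_mem F hn, sum_boole]

lemma abs_rem_sieve_le {q : ℕ} (hq : q ≠ 0) (hqm : q.Coprime m) :
    |(hF.sieve N z).rem q| ≤ κ ^ ω q := by
  have hcount := hF.abs_card_dvd_sub_le hq hqm N N
  rwa [← two_mul, mul_comm (N : ℝ), ← hF.nu_sieve (N := N) (z := z), ← multSum_sieve hF (z := z)]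
    at hcount

lemma abs_rem_lcm_sieve_le {q d e : ℕ} (hq : q ≠ 0) (hqm : q.Coprime m)
    (hd : d ∣ (hF.sieve N z).prodPrimes) (he : e ∣ (hF.sieve N z).prodPrimes) :
    |(hF.sieve N z).rem (q.lcm (d.lcm e))|
      ≤ κ ^ ω q * (d * (hF.sieve N z).nu d * (e * (hF.sieve N z).nu e)) := by
  have hd0 := ne_zero_of_dvd_ne_zero (hF.sieve N z).prodPrimes_ne_zero hd
  have he0 := ne_zero_of_dvd_ne_zero (hF.sieve N z).prodPrimes_ne_zero he
  have hde : (d.lcm e).Coprime m :=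
    hF.coprime_of_dvd_prodPrimes_sieve (N := N) (z := z) (Nat.lcm_dvd hd he)
  have hlcm : (q.lcm (d.lcm e)).Coprime m :=
    Nat.Coprime.coprime_dvd_left (Nat.lcm_dvd_mul q _) (hqm.mul_left hde)
  have hde0 := Nat.lcm_ne_zero hd0 he0
  rw [hF.mul_nu_sieve hd0, hF.mul_nu_sieve he0]
  calc |(hF.sieve N z).rem (q.lcm (d.lcm e))| ≤ κ ^ ω (q.lcm (d.lcm e)) :=
        hF.abs_rem_sieve_le (Nat.lcm_ne_zero hq hde0) hlcm
    _ ≤ κ ^ ω q * κ ^ ω (d.lcm e) := pow_omega_lcm_le hF.dim_ne_zero hq hde0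
    _ ≤ κ ^ ω q * (κ ^ ω d * κ ^ ω e) :=
        mul_le_mul_of_nonneg_left (pow_omega_lcm_le hF.dim_ne_zero hd0 he0) (by positivity)


/-- The mass which the squares of the Selberg weights of level `R` give to the multiples of `q`
among the values of `F` on `[N, 2N)`. -/
noncomputable def sieveSum (N R q : ℕ) : ℝ :=
  squareSum (hF.sieve N (R ^ 2)) (selbergWeight (hF.sieve N (R ^ 2)) (truncLog R)) q

/-- The bound for the total remainder in the evaluation of `sieveSum`. -/
noncomputable def sieveError (N R : ℕ) : ℝ :=
  (∑ d ∈ (hF.sieve N (R ^ 2)).prodPrimes.divisors,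
    |selbergWeight (hF.sieve N (R ^ 2)) (truncLog R) d| * (d * (hF.sieve N (R ^ 2)).nu d)) ^ 2

lemma sieveError_nonneg (N R : ℕ) : 0 ≤ hF.sieveError N R := sq_nonneg _

lemma exists_sieveError_le :
    ∃ C, 0 ≤ C ∧ ∀ N R : ℕ, 2 ≤ R → hF.sieveError N R ≤ C * (R ^ 2 * log R ^ (4 * κ + 2)) := by
  obtain ⟨C, _, hV⟩ := exists_sum_selbergTerms_le κ
  refine ⟨(C * 2 ^ κ) ^ 4, by positivity, fun N R hR ↦ ?_⟩
  set s := hF.sieve N (R ^ 2)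
  have := log_natCast_nonneg R
  have hterms : 0 ≤ ∑ r ∈ s.prodPrimes.divisors, s.selbergTerms r :=
    sum_nonneg fun r hr ↦ selbergTerms_nonneg_of_mem hr
  have hsum : ∑ r ∈ s.prodPrimes.divisors, s.selbergTerms r ≤ C * 2 ^ κ * log R ^ κ := by
    have hz : 2 ≤ R ^ 2 := by nlinarith
    refine (hV s (R ^ 2) hz (fun p ↦ hF.nu_sieve_of_mem_primeFactors)
      fun p ↦ hF.le_of_mem_primeFactors_prodPrimes_sieve).trans_eq ?_
    rw [Nat.cast_pow, log_pow, mul_pow, Nat.cast_two, mul_assoc]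
  calc hF.sieveError N R
      ≤ (log R * R * (∑ r ∈ s.prodPrimes.divisors, s.selbergTerms r) ^ 2) ^ 2 := by
        refine pow_le_pow_left₀ (sum_nonneg fun d hd ↦ ?_)
          (sum_abs_selbergWeight_mul_le (fun k ↦ ?_) fun k ↦ truncLog_eq_zero) 2
        · have := s.nu_pos_of_dvd_prodPrimes (Nat.dvd_of_mem_divisors hd)
          positivity
        · rw [abs_of_nonneg (truncLog_nonneg R k)]
          exact truncLog_le_log R k
    _ ≤ (log R * R * (C * 2 ^ κ * log R ^ κ) ^ 2) ^ 2 := by gcongr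
    _ = _ := by ring

lemma abs_sieveSum_one_sub_le (N R : ℕ) :
    |hF.sieveSum N R 1 - N * logMoment (hF.sieve N (R ^ 2)) R 2| ≤ hF.sieveError N R := by
  set s := hF.sieve N (R ^ 2)
  have h := abs_squareSum_sub_le (s := s) (selbergWeight s (truncLog R)) (q := 1) (c := 1)
    (ρ := fun d ↦ d * s.nu d) fun d hd e he ↦ by
      have hrem := hF.abs_rem_lcm_sieve_le (N := N) (z := R ^ 2) one_ne_zero m.coprime_one_left
        (Nat.dvd_of_mem_divisors hd) (Nat.dvd_of_mem_divisors he)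
      rwa [ArithmeticFunction.cardDistinctFactors_one, pow_zero] at hrem
  simp only [Nat.lcm_one_left, sum_sum_selbergWeight_mul_nu_lcm, one_mul] at h
  exact h

lemma sieveSum_prime_pow_le {N R p a : ℕ} (hp : p ∈ (hF.sieve N (R ^ 2)).prodPrimes.primeFactors)
    (ha : a ≠ 0) :
    hF.sieveSum N R (p ^ a)
      ≤ N * ((hF.sieve N (R ^ 2)).nu (p ^ a) * minMoment (hF.sieve N (R ^ 2)) R p)
        + κ * hF.sieveError N R := by
  set s := hF.sieve N (R ^ 2)
  have hpprime := Nat.prime_of_mem_primeFactors hp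
  have hpP := Nat.dvd_of_mem_primeFactors hp
  have h := abs_squareSum_sub_le (s := s) (selbergWeight s (truncLog R)) (q := p ^ a) (c := κ)
    (ρ := fun d ↦ d * s.nu d) fun d hd e he ↦ by
      have hrem := hF.abs_rem_lcm_sieve_le (N := N) (z := R ^ 2) (pow_ne_zero a hpprime.ne_zero)
        ((hF.coprime_of_dvd_prodPrimes_sieve hpP).pow_left a)
        (Nat.dvd_of_mem_divisors hd) (Nat.dvd_of_mem_divisors he)
      rwa [ArithmeticFunction.cardDistinctFactors_apply_prime_pow hpprime ha, pow_one] at hrem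
  have hnu : 0 ≤ s.nu (p ^ a) := by
    rw [nu_sieve]
    positivity
  have hmain := sum_sum_selbergWeight_mul_nu_lcm_prime_pow_le (truncLog R) hpprime hpP ha hnu
  rw [sum_selbergTerms_mul_sub_sq _ R hpprime.ne_zero] at hmain
  have hN := mul_le_mul_of_nonneg_left hmain N.cast_nonneg
  exact (sub_le_iff_le_add'.1 (le_of_abs_le h)).trans (add_le_add hN le_rfl)


lemma exists_sum_mul_sieveSum_prime_le :
    ∃ C, 0 ≤ C ∧ ∀ N R : ℕ, 0 < R →
      ∑ p ∈ (hF.sieve N (R ^ 2)).prodPrimes.primeFactors,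
          (1 - log p / (2 * log R)) * hF.sieveSum N R p
        ≤ N * (smallPrimeExcess κ * logMoment (hF.sieve N (R ^ 2)) R 2
            + C * logMoment (hF.sieve N (R ^ 2)) R 1) + κ * R ^ 2 * hF.sieveError N R := by
  obtain ⟨C, hC, hmoment⟩ := exists_sum_nu_mul_minMoment_le κ
  refine ⟨C, hC, fun N R hR ↦ ?_⟩
  set s := hF.sieve N (R ^ 2)
  have hterm (p : ℕ) (hp : p ∈ s.prodPrimes.primeFactors) :
      (1 - log p / (2 * log R)) * hF.sieveSum N R p
        ≤ N * ((1 - log p / (2 * log R)) * (s.nu p * minMoment s R p))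
          + κ * hF.sieveError N R := by
    have hweight : 0 ≤ 1 - log p / (2 * log R) := one_sub_log_div_nonneg <|
      hF.le_of_mem_primeFactors_prodPrimes_sieve hp
    have hweight' : 1 - log p / (2 * log R) ≤ 1 := sub_le_self _ <|
      div_nonneg (log_natCast_nonneg p) (mul_nonneg zero_le_two (log_natCast_nonneg R))
    have hsum := mul_le_mul_of_nonneg_left (hF.sieveSum_prime_pow_le hp one_ne_zero) hweight
    have herror := mul_le_mul_of_nonneg_right hweight'
      (mul_nonneg κ.cast_nonneg (hF.sieveError_nonneg N R))
    rw [pow_one] at hsum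
    linarith
  have hcard : (#s.prodPrimes.primeFactors : ℝ) ≤ R ^ 2 := by
    exact_mod_cast hF.card_primeFactors_prodPrimes_sieve_le N (R ^ 2)
  have herror := mul_le_mul_of_nonneg_right hcard
    (mul_nonneg κ.cast_nonneg (hF.sieveError_nonneg N R))
  have hmain := mul_le_mul_of_nonneg_left
    (hmoment s R hR (fun p ↦ hF.nu_sieve_of_mem_primeFactors)
      fun p ↦ hF.le_of_mem_primeFactors_prodPrimes_sieve) N.cast_nonneg
  refine (sum_le_sum hterm).trans ?_
  rw [sum_add_distrib, ← mul_sum, sum_const, nsmul_eq_mul]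
  linarith

lemma exists_sum_sieveSum_prime_pow_le :
    ∃ C, 0 ≤ C ∧ ∀ N R A : ℕ,
      ∑ p ∈ (hF.sieve N (R ^ 2)).prodPrimes.primeFactors, ∑ a ∈ Ico 2 A, hF.sieveSum N R (p ^ a)
        ≤ N * (C * logMoment (hF.sieve N (R ^ 2)) R 1) + κ * R ^ 2 * A * hF.sieveError N R := by
  obtain ⟨C, hC, hmoment⟩ := exists_sum_inv_pow_mul_minMoment_le
  refine ⟨κ * C, by positivity, fun N R A ↦ ?_⟩
  set s := hF.sieve N (R ^ 2)
  have hterm (p : ℕ) (hp : p ∈ s.prodPrimes.primeFactors) (a : ℕ) (ha : a ∈ Ico 2 A) :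
      hF.sieveSum N R (p ^ a)
        ≤ N * κ * (((p : ℝ) ^ a)⁻¹ * minMoment s R p) + κ * hF.sieveError N R := by
    have ha0 : a ≠ 0 := by grind
    refine (hF.sieveSum_prime_pow_le hp ha0).trans_eq ?_
    rw [hF.nu_sieve_prime_pow (Nat.prime_of_mem_primeFactors hp) ha0]
    ring
  have hcard : (#s.prodPrimes.primeFactors * #(Ico 2 A) : ℝ) ≤ R ^ 2 * A := by
    have := hF.card_primeFactors_prodPrimes_sieve_le N (R ^ 2)
    have : #(Ico 2 A) ≤ A := by simp
    exact_mod_cast Nat.mul_le_mul ‹_› ‹_›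
  have herror := mul_le_mul_of_nonneg_right hcard
    (mul_nonneg κ.cast_nonneg (hF.sieveError_nonneg N R))
  have hmain := mul_le_mul_of_nonneg_left (hmoment s R A)
    (mul_nonneg N.cast_nonneg κ.cast_nonneg)
  refine (sum_le_sum fun p hp ↦ sum_le_sum (hterm p hp)).trans ?_
  simp only [sum_add_distrib, ← mul_sum, sum_const, nsmul_eq_mul]
  linarith

lemma two_mul_log_le_log {N R n p : ℕ} (hp : p ∈ (F n).primeFactors)
    (hpP : ¬p ∣ (hF.sieve N (R ^ 2)).prodPrimes) : 2 * log R ≤ log p := by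
  have hpprime := Nat.prime_of_mem_primeFactors hp
  have hpm : ¬p ∣ m := fun h ↦ Nat.not_coprime_of_dvd_of_dvd hpprime.one_lt
    (Nat.dvd_of_mem_primeFactors hp) h (hF.coprime n)
  have hlt : R ^ 2 < p := by
    by_contra! h
    exact hpP ((hF.prime_dvd_prodPrimes_sieve hpprime).2 ⟨h, hpm⟩)
  obtain rfl | hR := R.eq_zero_or_pos
  · simpa using log_natCast_nonneg p
  · calc 2 * log R = log ((R ^ 2 : ℕ) : ℝ) := by rw [Nat.cast_pow, log_pow, Nat.cast_two]
      _ ≤ log p := by gcongr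

lemma mul_sieveSum_one_le {N R A : ℕ} {K G : ℝ} (hR : 2 ≤ R)
    (hK : ∀ n ∈ Ico N (2 * N), K ≤ ArithmeticFunction.cardFactors (F n))
    (hG : ∀ n ∈ Ico N (2 * N), log (F n) ≤ G) (hA : ∀ n ∈ Ico N (2 * N), F n < 2 ^ A) :
    (K - G / (2 * log R)) * hF.sieveSum N R 1
      ≤ ∑ p ∈ (hF.sieve N (R ^ 2)).prodPrimes.primeFactors,
          (1 - log p / (2 * log R)) * hF.sieveSum N R p
        + ∑ p ∈ (hF.sieve N (R ^ 2)).prodPrimes.primeFactors,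
            ∑ a ∈ Ico 2 A, hF.sieveSum N R (p ^ a) := by
  have : 0 < log R := log_pos (by exact_mod_cast hR)
  refine mul_squareSum_one_le (by positivity) ?_ ?_ ?_ ?_ ?_ <;>
    refine forall_mem_image.2 fun n hn ↦ ?_
  · exact hF.ne_zero n
  · exact hK n hn
  · exact hG n hn
  · exact hA n hn
  · exact fun p hp ↦ hF.two_mul_log_le_log hp

lemma mul_sub_mul_sieveError_le {N R : ℕ} {K L : ℝ} (hK : 0 ≤ K) (hL : 0 ≤ L) :
    (K - L) * (N * logMoment (hF.sieve N (R ^ 2)) R 2) - (K + L) * hF.sieveError N R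
      ≤ (K - L) * hF.sieveSum N R 1 := by
  have hKL : |K - L| ≤ K + L := (abs_sub K L).trans_eq (by rw [abs_of_nonneg hK, abs_of_nonneg hL])
  have hdiff := (neg_le_abs _).trans <| (abs_mul _ _).trans_le <|
    mul_le_mul hKL (hF.abs_sieveSum_one_sub_le N R) (abs_nonneg _) (add_nonneg hK hL)
  linarith

lemma exists_sieve_inequality :
    ∃ C, 0 ≤ C ∧ ∀ (N R : ℕ) (K G : ℝ), 2 ≤ R → 0 ≤ K → 0 ≤ G →
      (∀ n ∈ Ico N (2 * N), K ≤ ArithmeticFunction.cardFactors (F n)) →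
      (∀ n ∈ Ico N (2 * N), log (F n) ≤ G) →
      N * ((K - G / (2 * log R) - smallPrimeExcess κ) * logMoment (hF.sieve N (R ^ 2)) R 2)
        ≤ N * (C * logMoment (hF.sieve N (R ^ 2)) R 1)
          + (K + G / (2 * log R) + κ * R ^ 2 * (G / log 2 + 2)) * hF.sieveError N R := by
  obtain ⟨C₁, hC₁, hprime⟩ := hF.exists_sum_mul_sieveSum_prime_le
  obtain ⟨C₂, hC₂, hpow⟩ := hF.exists_sum_sieveSum_prime_pow_le
  refine ⟨C₁ + C₂, add_nonneg hC₁ hC₂, fun N R K G hR hK hG hOmega hsize ↦ ?_⟩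
  have hlogR : 0 ≤ log R := log_natCast_nonneg R
  set A := ⌊G / log 2⌋₊ + 1
  have hmain := hF.mul_sub_mul_sieveError_le (N := N) (R := R) hK
    (div_nonneg hG (mul_nonneg zero_le_two hlogR))
  have hweighted := (hF.mul_sieveSum_one_le hR hOmega hsize fun n hn ↦
    lt_two_pow_floor_add_one (hsize n hn)).trans
      (add_le_add (hprime N R (by lia)) (hpow N R A))
  have hA : (A : ℝ) + 1 ≤ G / log 2 + 2 := by
    have := Nat.floor_le (div_nonneg hG (log_pos one_lt_two).le)
    push_cast [A]
    linarith
  have herror := mul_le_mul_of_nonneg_left hA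
    (mul_nonneg (by positivity : 0 ≤ κ * (R : ℝ) ^ 2) (hF.sieveError_nonneg N R))
  linarith

end HasSieveDimension

/-! ### Letting the level tend to infinity -/

open Filter Topology

/-- The length of the interval that is sieved with weights of level `2 ^ k`: the fourth power of the
level, times a power of its logarithm which absorbs the remainder terms. -/
def sieveLength (κ k : ℕ) : ℕ := 16 ^ k * k ^ (4 * κ + 4)

lemma log_two_mul_sieveLength {κ k : ℕ} (hk : k ≠ 0) :
    log (2 * sieveLength κ k) = log 2 + 4 * (k * log 2) + (4 * κ + 4) * log k := by
  have : (k : ℝ) ≠ 0 := Nat.cast_ne_zero.2 hk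
  have hpow : log (16 : ℝ) = 4 * log 2 := by
    rw [show (16 : ℝ) = 2 ^ 4 by norm_num, log_pow, Nat.cast_ofNat]
  push_cast [sieveLength]
  rw [log_mul two_ne_zero (by positivity), log_mul (by positivity) (by positivity), log_pow,
    log_pow, hpow]
  push_cast
  ring

lemma le_sieveLength {κ k : ℕ} (hk : k ≠ 0) : k ≤ sieveLength κ k :=
  (k.lt_pow_self (by norm_num : 1 < 16)).le.trans
    (Nat.le_mul_of_pos_right _ (by positivity))

lemma div_sieveLength {κ k : ℕ} (hk : k ≠ 0) (x : ℝ) :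
    (2 ^ k) ^ 2 * x * ((2 ^ k) ^ 2 * k ^ (4 * κ + 2)) / sieveLength κ k = x / k ^ 2 := by
  have : (k : ℝ) ≠ 0 := Nat.cast_ne_zero.2 hk
  have hpow : (16 : ℝ) ^ k = (2 ^ k) ^ 4 := by rw [← pow_mul, mul_comm, pow_mul]; norm_num
  push_cast [sieveLength]
  rw [hpow, div_eq_div_iff (by positivity) (by positivity)]
  ring

lemma tendsto_log_div_natCast_atTop : Tendsto (fun k : ℕ ↦ log k / k) atTop (𝓝 0) :=
  isLittleO_log_id_atTop.tendsto_div_nhds_zero.comp tendsto_natCast_atTop_atTop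

lemma tendsto_log_sieveLength_div (c g κ : ℕ) :
    Tendsto (fun k : ℕ ↦ (log c + g * log (2 * sieveLength κ k)) / (2 * (k * log 2))) atTop
      (𝓝 (2 * g)) := by
  have hlim := (((tendsto_one_div_atTop_nhds_zero_nat (𝕜 := ℝ)).const_mul
    ((log c + g * log 2) / (2 * log 2))).add
      (tendsto_log_div_natCast_atTop.const_mul (g * (4 * κ + 4) / (2 * log 2)))).const_add
        (2 * g : ℝ)
  rw [mul_zero, mul_zero, add_zero, add_zero] at hlim
  refine hlim.congr' ?_
  filter_upwards [eventually_ne_atTop 0] with k hk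
  have : log 2 ≠ 0 := (log_pos one_lt_two).ne'
  have : (k : ℝ) ≠ 0 := Nat.cast_ne_zero.2 hk
  rw [log_two_mul_sieveLength hk]
  field_simp
  ring

lemma tendsto_remainder {L : ℕ → ℝ} {l : ℝ} (hL : Tendsto L atTop (𝓝 l)) (C K κ : ℝ) :
    Tendsto (fun k : ℕ ↦ C * (1 / (k * log 2) + (K + L k + κ * (L k * (2 * k) + 2)) / k ^ 2))
      atTop (𝓝 0) := by
  have hinv := tendsto_one_div_atTop_nhds_zero_nat (𝕜 := ℝ)
  have hlim := ((hinv.const_mul (1 / log 2)).add ((((hL.const_add (K + 2 * κ)).mul hinv).add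
    (hL.const_mul (2 * κ))).mul hinv)).const_mul C
  simp only [mul_zero, add_zero] at hlim
  refine hlim.congr' ?_
  filter_upwards [eventually_ne_atTop 0] with k hk
  have : (k : ℝ) ≠ 0 := Nat.cast_ne_zero.2 hk
  field_simp
  ring

namespace HasSieveDimension

variable {F : ℕ → ℕ} {m κ : ℕ} (hF : HasSieveDimension F m κ)

lemma exists_logMoment_one_le :
    ∃ C, ∀ N R : ℕ, C ≤ log R → logMoment (hF.sieve N (R ^ 2)) R 1
      ≤ (κ + 2) / log R * logMoment (hF.sieve N (R ^ 2)) R 2 := by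
  obtain ⟨C, hC, hmoment⟩ := exists_log_mul_logMoment_one_le κ
  refine ⟨2 * C + 1, fun N R hR ↦ ?_⟩
  have hlog : 0 < log R := by linarith
  have hR0 : 0 < R := Nat.pos_of_ne_zero fun h ↦ by simp [h] at hlog
  have := hmoment (hF.sieve N (R ^ 2)) R hR0 fun p ↦ hF.nu_sieve_of_mem_primeFactors
  have := mul_le_mul_of_nonneg_right hR (logMoment_nonneg (hF.sieve N (R ^ 2)) R 1)
  have := logMoment_nonneg (hF.sieve N (R ^ 2)) R 1
  rw [div_mul_eq_mul_div, le_div_iff₀ hlog]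
  linarith

lemma exists_sub_sub_smallPrimeExcess_le (hF : HasSieveDimension F m κ) :
    ∃ C, 0 ≤ C ∧ ∀ᶠ R : ℕ in atTop, ∀ (N : ℕ) (K G : ℝ), N ≠ 0 → 0 ≤ K → 0 ≤ G →
      (∀ n ∈ Ico N (2 * N), K ≤ ArithmeticFunction.cardFactors (F n)) →
      (∀ n ∈ Ico N (2 * N), log (F n) ≤ G) →
      K - G / (2 * log R) - smallPrimeExcess κ ≤ C * (1 / log R
        + (K + G / (2 * log R) + κ * R ^ 2 * (G / log 2 + 2)) * (R ^ 2 * log R ^ (4 * κ + 2)) / N)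
      := by
  obtain ⟨C₁, hC₁, hsieve⟩ := hF.exists_sieve_inequality
  obtain ⟨C₂, hmoment⟩ := hF.exists_logMoment_one_le
  obtain ⟨C₃, hC₃, herror⟩ := hF.exists_sieveError_le
  refine ⟨C₁ * (κ + 2) + C₃, by positivity, ?_⟩
  filter_upwards [eventually_ge_atTop 2,
    (tendsto_log_atTop.comp tendsto_natCast_atTop_atTop).eventually_ge_atTop (max C₂ 1)]
    with R hR2 hlogR N K G hN hK hG hOmega hsize
  obtain ⟨hlogC, hlog1⟩ := max_le_iff.1 hlogR
  have hlog : 0 < log R := one_pos.trans_le hlog1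
  set T := logMoment (hF.sieve N (R ^ 2)) R 2
  set W := K + G / (2 * log R) + κ * R ^ 2 * (G / log 2 + 2)
  have hW : 0 ≤ W := by positivity
  have hT : 1 ≤ T := (one_le_pow₀ hlog1).trans (log_sq_le_logMoment_two _ R)
  have hNpos : (0 : ℝ) < N := by positivity
  have hbound : N * ((K - G / (2 * log R) - smallPrimeExcess κ) * T)
      ≤ N * (C₁ * ((κ + 2) / log R * T)) + W * (C₃ * (R ^ 2 * log R ^ (4 * κ + 2))) * T :=
    (hsieve N R K G hR2 hK hG hOmega hsize).trans <| add_le_add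
      (by gcongr; exact hmoment N R hlogC)
      ((mul_le_mul_of_nonneg_left (herror N R hR2) hW).trans
        (le_mul_of_one_le_right (by positivity) hT))
  refine le_of_mul_le_mul_left (a := N * T) ?_ (mul_pos hNpos (one_pos.trans_le hT))
  calc N * T * (K - G / (2 * log R) - smallPrimeExcess κ)
      ≤ N * (C₁ * ((κ + 2) / log R * T)) + W * (C₃ * (R ^ 2 * log R ^ (4 * κ + 2))) * T := by
        linarith
    _ = N * T * (C₁ * (κ + 2) * (1 / log R) + C₃ * (W * (R ^ 2 * log R ^ (4 * κ + 2)) / N)) := by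
        field_simp
    _ ≤ _ := by
        rw [mul_add _ (1 / log R)]
        gcongr
        · exact le_add_of_nonneg_right hC₃
        · exact le_add_of_nonneg_left (by positivity)

/-- With weights of level `R = 2 ^ k`, where `R ^ (2 * L)` bounds the sieved values. -/
lemma exists_eventually_sub_le (hF : HasSieveDimension F m κ) :
    ∃ C, 0 ≤ C ∧ ∀ᶠ k : ℕ in atTop, ∀ K L : ℝ, 0 ≤ K → 0 ≤ L →
      (∀ n ∈ Ico (sieveLength κ k) (2 * sieveLength κ k),
        K ≤ ArithmeticFunction.cardFactors (F n)) →
      (∀ n ∈ Ico (sieveLength κ k) (2 * sieveLength κ k), log (F n) ≤ L * (2 * (k * log 2))) →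
      K - L - smallPrimeExcess κ
        ≤ C * (1 / (k * log 2) + (K + L + κ * (L * (2 * k) + 2)) / k ^ 2) := by
  obtain ⟨C, hC, hsieve⟩ := hF.exists_sub_sub_smallPrimeExcess_le
  refine ⟨C, hC, ?_⟩
  filter_upwards [(tendsto_pow_atTop_atTop_of_one_lt one_lt_two).eventually hsieve,
    eventually_gt_atTop 0] with k hk hk0 K L hK hL hOmega hsize
  have : 0 < log 2 := log_pos one_lt_two
  have hlog2 : log 2 ≤ 1 := by linarith [log_two_lt_d9]
  have hN : sieveLength κ k ≠ 0 := by
    simp [sieveLength, hk0.ne']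
  have hlog : log ((2 ^ k : ℕ) : ℝ) = k * log 2 := by rw [Nat.cast_pow, log_pow, Nat.cast_two]
  have h := hk _ K (L * (2 * (k * log 2))) hN hK (by positivity) hOmega hsize
  rw [hlog, mul_div_cancel_right₀ _ (by positivity)] at h
  refine h.trans (mul_le_mul_of_nonneg_left (add_le_add le_rfl ?_) hC)
  have hterm : L * (2 * (k * log 2)) / log 2 = L * (2 * k) := by field_simp
  have hpow : (1 : ℝ) ≤ (2 ^ k) ^ 2 := one_le_pow₀ (one_le_pow₀ one_le_two)
  push_cast [hterm]
  rw [← div_sieveLength (κ := κ) hk0.ne']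
  gcongr
  · have := mul_le_mul_of_nonneg_right hpow (add_nonneg hK hL)
    linarith
  · exact mul_le_of_le_one_right k.cast_nonneg hlog2

lemma log_apply_le (hF : HasSieveDimension F m κ) {c g n N : ℕ}
    (hgrowth : ∀ n ≠ 0, F n ≤ c * n ^ g) (hn : n ≠ 0) (hnN : n ≤ 2 * N) :
    log (F n) ≤ log c + g * log (2 * N) := by
  have hle : F n ≤ c * (2 * N) ^ g :=
    (hgrowth n hn).trans (Nat.mul_le_mul_left c (Nat.pow_le_pow_left hnN g))
  have hc : (c : ℝ) ≠ 0 := Nat.cast_ne_zero.2 fun hc ↦ hF.ne_zero n (by simpa [hc] using hle)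
  have hN : (2 * N : ℝ) ≠ 0 := by exact_mod_cast fun h ↦ hn (by lia)
  rw [← log_pow, ← log_mul hc (pow_ne_zero g hN)]
  exact log_le_log (by exact_mod_cast Nat.pos_of_ne_zero (hF.ne_zero n)) (by exact_mod_cast hle)

/-- If every value `F n` with `n ≥ M` had more than `r` prime factors, the sieve would give
`r + 1 ≤ 2 g + smallPrimeExcess κ` in the limit. -/
theorem infinite_cardFactors_le (hF : HasSieveDimension F m κ) {c g r : ℕ}
    (hgrowth : ∀ n ≠ 0, F n ≤ c * n ^ g) (h : 2 * g + smallPrimeExcess κ < r + 1) :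
    {n | ArithmeticFunction.cardFactors (F n) ≤ r}.Infinite := by
  by_contra hfin
  obtain ⟨M, hM⟩ := (Set.not_infinite.1 hfin).bddAbove
  obtain ⟨C, -, hsieve⟩ := hF.exists_eventually_sub_le
  have hL := tendsto_log_sieveLength_div c g κ
  have hle : (r + 1 : ℝ) - 2 * g - smallPrimeExcess κ ≤ 0 := by
    refine le_of_tendsto_of_tendsto ((hL.const_sub _).sub_const _)
      (tendsto_remainder hL C (r + 1) κ) ?_
    filter_upwards [hsieve, eventually_gt_atTop M] with k hk hkM
    have hk0 : k ≠ 0 := by lia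
    have := log_pos one_lt_two
    have hkN := le_sieveLength (κ := κ) hk0
    have hlogN : 0 ≤ log (2 * sieveLength κ k) :=
      log_nonneg (by exact_mod_cast (by lia : 1 ≤ 2 * sieveLength κ k))
    have : 0 ≤ log c := log_natCast_nonneg c
    refine hk _ _ (by positivity) (by positivity) (fun n hn ↦ ?_) fun n hn ↦ ?_
    · have : ¬ArithmeticFunction.cardFactors (F n) ≤ r := fun hn' ↦ by
        have := hM hn'
        grind
      exact_mod_cast not_le.1 this
    · rw [div_mul_cancel₀ _ (by positivity)]
      exact hF.log_apply_le hgrowth (by grind) (mem_Ico.1 hn).2.le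
  linarith

end HasSieveDimension

theorem infinite_cardFactors_prod_linear_le {ι : Type*} [Fintype ι] [Nonempty ι] {a b : ι → ℕ}
    {m r : ℕ} (hb : ∀ i, b i ≠ 0)
    (hma : ∀ i, m ∣ a i) (hbm : ∀ i, (b i).Coprime m)
    (hsmall : ∀ p, p.Prime → p ≤ Fintype.card ι → p ∣ m)
    (ha : ∀ p, p.Prime → ∀ i, p ∣ a i → p ∣ m)
    (hdet : ∀ p : ℕ, p.Prime → ∀ i j, i ≠ j → (p : ℤ) ∣ a i * b j - a j * b i → p ∣ m)
    (h : 2 * Fintype.card ι + smallPrimeExcess (Fintype.card ι) < r + 1) :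
    {n | ArithmeticFunction.cardFactors (∏ i, (a i * n + b i)) ≤ r}.Infinite :=
  (hasSieveDimension_prod_linear hb hma hbm hsmall ha hdet).infinite_cardFactors_le
    (fun _ ↦ prod_linear_le) h

lemma three_mul_log_five_lt : 3 * log 5 < 4.9 := by
  have hlog : 3 * log 5 ≤ 7 * log 2 := by
    have := log_le_log (by norm_num) (by norm_num : (5 : ℝ) ^ 3 ≤ 2 ^ 7)
    simpa only [log_pow, Nat.cast_ofNat] using this
  linarith [log_two_lt_d9]

lemma six_add_smallPrimeExcess_three_lt : 2 * 3 + smallPrimeExcess 3 < 9 + 1 := by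
  have := three_mul_log_five_lt
  norm_num [smallPrimeExcess]
  linarith

theorem infinite_cardFactors_triple_le :
    {n | ArithmeticFunction.cardFactors
      ((6 * n + 1) * (36 * n + 5) * (36 * n + 7)) ≤ 9}.Infinite := by
  have hprime {p : ℕ} {x : ℤ} (hp : p.Prime) (hpx : (p : ℤ) ∣ x) (hx : x ∣ 6 ^ 3) : p ∣ 6 :=
    hp.dvd_of_dvd_pow (by exact_mod_cast hpx.trans hx)
  let a : Fin 3 → ℕ := ![6, 36, 36]
  let b : Fin 3 → ℕ := ![1, 5, 7]
  have hcoeff : ∀ i, (a i : ℤ) ∣ 6 ^ 3 := by decide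
  have hdet : ∀ i j, i ≠ j → (a i * b j - a j * b i : ℤ) ∣ 6 ^ 3 := by decide
  have hinf := infinite_cardFactors_prod_linear_le (a := a) (b := b) (m := 6) (r := 9)
    (by decide) (by decide) (by decide) (fun p hp ↦ hp.dvd_factorial.2)
    (fun p hp i hpa ↦ hprime hp (Int.natCast_dvd_natCast.2 hpa) (hcoeff i))
    (fun p hp i j hij hpd ↦ hprime hp hpd (hdet i j hij))
    (by simpa using six_add_smallPrimeExcess_three_lt)
  simp only [Fin.prod_univ_three] at hinf
  exact hinf

end WeightedSieve

/-- There are infinitely many integers `m ≥ 2` with `Ω(m³ − m) ≤ 11`,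
where `Ω` counts prime divisors with multiplicity. -/
theorem infinite_Omega_cube_sub_self_le_eleven :
    {m : ℕ | 2 ≤ m ∧ ArithmeticFunction.cardFactors (m ^ 3 - m) ≤ 11}.Infinite := by
  have hinj : Function.Injective fun n ↦ 36 * n + 6 := fun _ _ h ↦ by grind
  refine (WeightedSieve.infinite_cardFactors_triple_le.image hinj.injOn).mono ?_
  rintro _ ⟨n, hn, rfl⟩
  have hfactor : (36 * n + 6) ^ 3 - (36 * n + 6)
      = 2 * 3 * ((6 * n + 1) * (36 * n + 5) * (36 * n + 7)) := Nat.sub_eq_of_eq_add (by ring)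
  refine ⟨by lia, ?_⟩
  rw [hfactor, ArithmeticFunction.cardFactors_mul (by norm_num) (by positivity),
    ArithmeticFunction.cardFactors_mul two_ne_zero three_ne_zero,
    ArithmeticFunction.cardFactors_apply_prime Nat.prime_two,
    ArithmeticFunction.cardFactors_apply_prime Nat.prime_three]
  exact Nat.add_le_add_left hn 2
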